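/- Let (Q, 𝔫, k) be a commutative Noetherian local ring. Suppose there exists a resolution format f = (1, m, m+n−1, n) with m ≥ 3, n ≥ 1 such that: (1) there exists a grade 3 perfect ideal in Q of format f; (2) f is not Dynkin, i.e. 2(m+n−1) ≤ (m−2)(n+1); and (3) every grade 3 perfect ideal in Q of format f is licci. Then at least one of the formats (1, 6, 8, 3) or (1, 8, 9, 2) satisfies conditions (1), (2), and (3). -/

import Mathlib

/-- An ideal `I` in a commutative Noetherian local ring `Q` has **resolution format**
`(1, m, m+n-1, n)` if the minimal free resolution of `Q/I` over `Q` is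
`0 → Q^n → Q^{m+n-1} → Q^m → Q`, i.e. there is an exact complex of free modules of the
indicated ranks augmented by `Q → Q/I → 0`, which is minimal in the sense that each
differential maps into `𝔫` times the target (`𝔫` the maximal ideal).  Equivalently, the
`i`-th entry of the format is the Betti number `dim_k Tor_i^Q(Q/I, k)`. -/
def HasResolutionFormat {Q : Type*} [CommRing Q] [IsLocalRing Q]
    (I : Ideal Q) (m n : ℕ) : Prop :=
  ∃ (d1 : (Fin m → Q) →ₗ[Q] Q)
    (d2 : (Fin (m + n - 1) → Q) →ₗ[Q] (Fin m → Q))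
    (d3 : (Fin n → Q) →ₗ[Q] (Fin (m + n - 1) → Q)),
    LinearMap.range d1 = I ∧
    LinearMap.range d2 = LinearMap.ker d1 ∧
    LinearMap.range d3 = LinearMap.ker d2 ∧
    LinearMap.ker d3 = ⊥ ∧
    I ≤ IsLocalRing.maximalIdeal Q ∧
    LinearMap.range d2 ≤ (IsLocalRing.maximalIdeal Q) • (⊤ : Submodule Q (Fin m → Q)) ∧
    LinearMap.range d3 ≤ (IsLocalRing.maximalIdeal Q) • (⊤ : Submodule Q (Fin (m + n - 1) → Q))

/-- `I` is a grade `3` perfect ideal of resolution format `(1, m, m+n-1, n)`: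
`I` contains a `Q`-regular sequence of length `3`, one has `m ≥ 3` and `n ≥ 1`, and the
minimal free resolution of `Q/I` has the format `(1, m, m+n-1, n)` (in particular `Q/I`
has projective dimension `3` as a `Q`-module, since `n ≥ 1`). -/
def IsGrade3PerfectOfFormat {Q : Type*} [CommRing Q] [IsLocalRing Q]
    (I : Ideal Q) (m n : ℕ) : Prop :=
  (∃ x y z : Q, x ∈ I ∧ y ∈ I ∧ z ∈ I ∧ RingTheory.Sequence.IsRegular Q [x, y, z]) ∧
  3 ≤ m ∧ 1 ≤ n ∧ HasResolutionFormat I m n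

/-- `J` is **directly linked** to `I` if there is a `Q`-regular sequence `x₁, x₂, x₃` of
elements of `I` with `J = (x₁, x₂, x₃) : I`. -/
def DirectlyLinked {Q : Type*} [CommRing Q] (I J : Ideal Q) : Prop :=
  ∃ x y z : Q, x ∈ I ∧ y ∈ I ∧ z ∈ I ∧ RingTheory.Sequence.IsRegular Q [x, y, z] ∧
    J = Submodule.colon (Ideal.span {x, y, z}) I

/-- `J` is **linked** to `I` if there is a finite chain of ideals
`I = J₀, J₁, …, J_r = J` in which `J_{i+1}` is directly linked to `J_i` for every `i`. -/
def Linked {Q : Type*} [CommRing Q] (I J : Ideal Q) : Prop :=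
  Relation.ReflTransGen (fun A B => DirectlyLinked A B) I J

/-- `I` is **licci** if it is linked to an ideal generated by a `Q`-regular sequence of
length `3`, i.e. `I` is in the linkage class of a complete intersection ideal. -/
def Licci {Q : Type*} [CommRing Q] (I : Ideal Q) : Prop :=
  ∃ C : Ideal Q, Linked I C ∧
    ∃ x y z : Q, RingTheory.Sequence.IsRegular Q [x, y, z] ∧ C = Ideal.span {x, y, z}


open RingTheory.Sequence
open scoped Pointwise


theorem weaklyReg3_iff {Q : Type*} [CommRing Q] (x y z : Q) :
    IsWeaklyRegular Q [x, y, z] ↔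
      (∀ c, x * c = 0 → c = 0) ∧ (∀ c, y * c ∈ Ideal.span {x} → c ∈ Ideal.span {x}) ∧
      (∀ c, z * c ∈ Ideal.span {x, y} → c ∈ Ideal.span {x, y}) := by
  rw [isWeaklyRegular_iff_Fin]
  have e : Ideal.ofList [x, y] = Ideal.span {x, y} := by
    simp [Ideal.ofList]; rfl
  have e1 : Ideal.ofList [x] = Ideal.span {x} := by simp
  constructor
  · intro h
    have h0 := h ⟨0, by simp⟩
    have h1 := h ⟨1, by simp⟩
    have h2 := h ⟨2, by simp⟩
    rw [isSMulRegular_quotient_iff_mem_of_smul_mem] at h0 h1 h2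
    simp only [List.take, e, e1, smul_eq_mul, Ideal.mul_top, Ideal.ofList_nil] at h0 h1 h2
    refine ⟨fun c hc => by simpa using h0 c (by simpa using hc), fun c hc => h1 c hc, fun c hc => h2 c hc⟩
  · rintro ⟨h0, h1, h2⟩ i
    rw [isSMulRegular_quotient_iff_mem_of_smul_mem]
    fin_cases i
    · simp only [smul_eq_mul, Ideal.mul_top]
      intro c hc
      simpa using h0 c (by simpa using hc)
    · change ∀ c, _ ∈ (Ideal.ofList [x] • ⊤ : Ideal Q) → _ ∈ (Ideal.ofList [x] • ⊤ : Ideal Q)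
      simp only [smul_eq_mul, Ideal.mul_top, e1]
      intro c hc
      exact h1 c hc
    · change ∀ c, _ ∈ (Ideal.ofList [x, y] • ⊤ : Ideal Q) → _ ∈ (Ideal.ofList [x, y] • ⊤ : Ideal Q)
      simp only [smul_eq_mul, Ideal.mul_top, e]
      intro c hc
      exact h2 c hc

theorem reg3_mem {Q : Type*} [CommRing Q] [IsLocalRing Q] {x y z : Q}
    (h : IsRegular Q [x, y, z]) : x ∈ IsLocalRing.maximalIdeal Q ∧
      y ∈ IsLocalRing.maximalIdeal Q ∧ z ∈ IsLocalRing.maximalIdeal Q := by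
  have h4 := h.top_ne_smul
  have : Ideal.ofList [x, y, z] ≤ IsLocalRing.maximalIdeal Q := by
    refine IsLocalRing.le_maximalIdeal ?_
    intro h5
    apply h4
    rw [h5]; simp
  refine ⟨this (Ideal.subset_span (by simp)), this (Ideal.subset_span (by simp)),
    this (Ideal.subset_span (by simp))⟩

theorem reg3_of {Q : Type*} [CommRing Q] [IsLocalRing Q] {x y z : Q}
    (h : IsWeaklyRegular Q [x, y, z]) (hx : x ∈ IsLocalRing.maximalIdeal Q)
    (hy : y ∈ IsLocalRing.maximalIdeal Q) (hz : z ∈ IsLocalRing.maximalIdeal Q) :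
    IsRegular Q [x, y, z] := by
  apply IsRegular.of_isWeaklyRegular_of_mem_maximalIdeal _ _ h
  intro r hr
  simp at hr
  rcases hr with rfl | rfl | rfl <;> assumption

theorem coset_avoid {Q : Type*} [CommRing Q] (S : Finset (Ideal Q)) (hS : ∀ P ∈ S, P.IsPrime)
    (A : Ideal Q) (hA : ∀ P ∈ S, ¬ A ≤ P) (l : Q) : ∃ n ∈ A, ∀ P ∈ S, l + n ∉ P := by
  classical
  let T := S.filter (fun P => ∀ P' ∈ S, P ≤ P' → P' = P)
  let T1 := T.filter (fun P => l ∈ P)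
  let T2 := T.filter (fun P => l ∉ P)
  let B := A ⊓ T2.inf id
  have hB : ∀ P ∈ T1, ¬ B ≤ P := by
    intro P hP hle
    simp only [T1, T, Finset.mem_filter] at hP
    have hp := hS P hP.1.1
    rcases (Ideal.IsPrime.inf_le hp).1 hle with h | h
    · exact hA P hP.1.1 h
    · rw [Ideal.IsPrime.inf_le' hp] at h
      obtain ⟨P', hP', h'⟩ := h
      simp only [T2, T, Finset.mem_filter] at hP'
      have := hP'.1.2 P hP.1.1 h'
      subst this
      exact hP'.2 hP.2
  have hav : ¬ ((B : Set Q) ⊆ ⋃ i ∈ (T1 : Set (Ideal Q)), (id i : Ideal Q)) := by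
    rw [Ideal.subset_union_prime ⊥ ⊥]
    · rintro ⟨P, hP, h⟩
      exact hB P hP h
    · intro P hP _ _
      simp only [T1, T, Finset.mem_filter] at hP
      exact hS P hP.1.1
  rw [Set.not_subset] at hav
  obtain ⟨n, hn, hn'⟩ := hav
  simp only [Set.mem_iUnion, not_exists] at hn'
  refine ⟨n, hn.1, ?_⟩
  have key : ∀ P ∈ T, l + n ∉ P := by
    intro P hP hmem
    by_cases hl : l ∈ P
    · have h1 : P ∈ T1 := by simp [T1, hP, hl]
      exact hn' P h1 ((Submodule.add_mem_iff_right _ hl).1 hmem)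
    · have h2 : P ∈ T2 := by simp [T2, hP, hl]
      have : n ∈ P := (Finset.inf_le (f := id) h2 : T2.inf id ≤ id P) hn.2
      exact hl ((Submodule.add_mem_iff_left _ this).1 hmem)
  intro P hP
  obtain ⟨M, hPM, hM⟩ := S.exists_le_maximal hP
  have : M ∈ T := by
    simp only [T, Finset.mem_filter]
    exact ⟨hM.1, fun P' hP' h => le_antisymm (hM.2 hP' h) h⟩
  exact fun h => key M this (hPM h)

theorem coset_regular {Q : Type*} [CommRing Q] [IsNoetherianRing Q] (M : Type*) [AddCommGroup M]
    [Module Q M] [Module.Finite Q M] (A : Ideal Q) (x : Q) (hx : x ∈ A) (hxM : IsSMulRegular M x) (l : Q) :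
    ∃ n ∈ A, IsSMulRegular M (l + n) := by
  classical
  have hfin := associatedPrimes.finite Q M
  have hun := biUnion_associatedPrimes_eq_zero_divisors Q M
  obtain ⟨n, hn, h⟩ := coset_avoid hfin.toFinset (fun P hP => by
    rw [Set.Finite.mem_toFinset] at hP; exact hP.isPrime) A (fun P hP hle => by
      rw [Set.Finite.mem_toFinset] at hP
      have : x ∈ ⋃ p ∈ associatedPrimes Q M, (p : Set Q) := Set.mem_iUnion₂_of_mem hP (hle hx)
      rw [hun] at this
      obtain ⟨y, hy, h⟩ := this
      exact hy (hxM (by simpa using h))) l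
  refine ⟨n, hn, ?_⟩
  rw [isSMulRegular_iff_right_eq_zero_of_smul]
  intro y hy
  by_contra hy0
  have : l + n ∈ ⋃ p ∈ associatedPrimes Q M, (p : Set Q) := by
    rw [hun]; exact ⟨y, hy0, hy⟩
  simp only [Set.mem_iUnion] at this
  obtain ⟨P, hP, hm⟩ := this
  exact h P (by simpa using hP) hm

theorem reg3_last {Q : Type*} [CommRing Q] [IsNoetherianRing Q] [IsLocalRing Q] {x y z : Q}
    (h : IsRegular Q [x, y, z]) (J : Ideal Q) (hJ : J ≤ IsLocalRing.maximalIdeal Q)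
    (hz : z ∈ J) (l : Q) (hl : l ∈ J) :
    ∃ n ∈ IsLocalRing.maximalIdeal Q • J, IsRegular Q [x, y, l + n] := by
  obtain ⟨mx, my, mz⟩ := reg3_mem h
  have hw := (weaklyReg3_iff x y z).1 h.toIsWeaklyRegular
  obtain ⟨n, hn, hr⟩ := coset_regular (Q ⧸ Ideal.span {x, y}) (IsLocalRing.maximalIdeal Q • J)
    (z * z) (Ideal.mul_mem_mul mz hz) (by
      rw [isSMulRegular_quotient_iff_mem_of_smul_mem]
      intro c hc
      simp only [smul_eq_mul, mul_assoc] at hc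
      exact hw.2.2 _ (hw.2.2 _ hc)) l
  refine ⟨n, hn, reg3_of ?_ mx my (add_mem (hJ hl) (Ideal.mul_le_left hn))⟩
  rw [weaklyReg3_iff]
  rw [isSMulRegular_quotient_iff_mem_of_smul_mem] at hr
  exact ⟨hw.1, hw.2.1, fun c hc => hr c hc⟩

/-- general regular sequence with prescribed residues -/
theorem reg3_coset {Q : Type*} [CommRing Q] [IsNoetherianRing Q] [IsLocalRing Q] {x y z : Q}
    (h : IsRegular Q [x, y, z]) (J : Ideal Q) (hJ : J ≤ IsLocalRing.maximalIdeal Q)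
    (hx : x ∈ J) (hy : y ∈ J) (hz : z ∈ J) (l1 l2 l3 : Q) (h1 : l1 ∈ J) (h2 : l2 ∈ J) (h3 : l3 ∈ J) :
    ∃ n1 ∈ IsLocalRing.maximalIdeal Q • J, ∃ n2 ∈ IsLocalRing.maximalIdeal Q • J,
    ∃ n3 ∈ IsLocalRing.maximalIdeal Q • J, IsRegular Q [l1 + n1, l2 + n2, l3 + n3] := by
  obtain ⟨n1, hn1, r1⟩ := reg3_last h J hJ hz l1 h1
  have r1' : IsRegular Q [l1 + n1, x, y] :=
    IsLocalRing.isRegular_of_perm r1 (.trans (.cons _ (.swap _ _ _)) (.swap _ _ _))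
  obtain ⟨n2, hn2, r2⟩ := reg3_last r1' J hJ hy l2 h2
  have r2' : IsRegular Q [l1 + n1, l2 + n2, x] :=
    IsLocalRing.isRegular_of_perm r2 (.cons _ (.swap _ _ _))
  obtain ⟨n3, hn3, r3⟩ := reg3_last r2' J hJ hx l3 h3
  exact ⟨n1, hn1, n2, hn2, n3, hn3, r3⟩

theorem reg3_sq {Q : Type*} [CommRing Q] [IsLocalRing Q] {x y z : Q}
    (h : IsRegular Q [x, y, z]) : IsRegular Q [x, y, z * z] := by
  obtain ⟨mx, my, mz⟩ := reg3_mem h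
  have hw := (weaklyReg3_iff x y z).1 h.toIsWeaklyRegular
  refine reg3_of ?_ mx my (Ideal.mul_mem_left _ _ mz)
  rw [weaklyReg3_iff]
  refine ⟨hw.1, hw.2.1, fun c hc => ?_⟩
  rw [mul_assoc] at hc
  exact hw.2.2 _ (hw.2.2 _ hc)


theorem lift_range {Q P M N : Type*} [CommRing Q] [AddCommGroup P] [Module Q P] [Module.Projective Q P]
    [AddCommGroup M] [Module Q M] [AddCommGroup N] [Module Q N] (f : M →ₗ[Q] N) (g : P →ₗ[Q] N)
    (h : ∀ p, ∃ m, f m = g p) : ∃ k : P →ₗ[Q] M, ∀ p, f (k p) = g p := by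
  obtain ⟨k, hk⟩ := Module.projective_lifting_property f.rangeRestrict
    (g.codRestrict (LinearMap.range f) (fun p => h p)) f.surjective_rangeRestrict
  refine ⟨k, fun p => ?_⟩
  have := LinearMap.congr_fun hk p
  exact congrArg Subtype.val this

theorem dual_step {Q N C2 C1 C0 Cm : Type*} [CommRing Q] [AddCommGroup N] [Module Q N]
    [AddCommGroup C2] [Module Q C2] [AddCommGroup C1] [Module Q C1] [AddCommGroup C0] [Module Q C0]
    [AddCommGroup Cm] [Module Q Cm] [Module.Projective Q C0] [Module.Projective Q Cm]
    (x : Q) (hx : IsSMulRegular N x) (d2 : C2 →ₗ[Q] C1) (d1 : C1 →ₗ[Q] C0) (d0 : C0 →ₗ[Q] Cm)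
    (h01 : ∀ c, d0 (d1 c) = 0) (s : C0 →ₗ[Q] C1) (hs : ∀ c, ∃ c2, s (d1 c) - x • c = d2 c2)
    (hE : ∀ θ : C0 →ₗ[Q] QuotSMulTop x N, (∀ c, θ (d1 c) = 0) →
      ∃ η : Cm →ₗ[Q] QuotSMulTop x N, ∀ c, θ c = η (d0 c))
    (ψ : C1 →ₗ[Q] N) (hψ : ∀ c, ψ (d2 c) = 0) : ∃ θ : C0 →ₗ[Q] N, ∀ c, ψ c = θ (d1 c) := by
  have key : ∀ c, ψ (s (d1 c)) = x • ψ c := by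
    intro c
    obtain ⟨c2, h⟩ := hs c
    have := hψ c2
    rw [← h, map_sub, map_smul] at this
    exact sub_eq_zero.1 this
  obtain ⟨η, hη⟩ := hE ((Submodule.mkQ _) ∘ₗ ψ ∘ₗ s) (by
    intro c
    simp only [LinearMap.comp_apply, Submodule.mkQ_apply, Submodule.Quotient.mk_eq_zero]
    rw [key]
    exact Submodule.smul_mem_pointwise_smul _ _ _ trivial)
  obtain ⟨η', hη'⟩ := lift_range (Submodule.mkQ (x • (⊤ : Submodule Q N))) η
    (fun p => Submodule.mkQ_surjective _ _)
  obtain ⟨k, hk⟩ := lift_range (LinearMap.lsmul Q N x) (ψ ∘ₗ s - η' ∘ₗ d0) (by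
    intro p
    have h1 := hη p
    rw [← hη'] at h1
    simp only [LinearMap.comp_apply, Submodule.mkQ_apply] at h1
    rw [Submodule.Quotient.eq, Submodule.mem_smul_pointwise_iff_exists] at h1
    obtain ⟨b, _, hb⟩ := h1
    exact ⟨b, by simpa using hb⟩)
  refine ⟨k, fun c => hx ?_⟩
  have := hk (d1 c)
  simp only [LinearMap.lsmul_apply, LinearMap.sub_apply, LinearMap.comp_apply, h01, map_zero, sub_zero] at this
  simp only [this, key]

theorem dual_exact {Q C3 C2 C1 C0 : Type*} [CommRing Q]
    [AddCommGroup C3] [Module Q C3] [AddCommGroup C2] [Module Q C2] [AddCommGroup C1] [Module Q C1]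
    [AddCommGroup C0] [Module Q C0]
    [Module.Projective Q C0] [Module.Projective Q C1]
    (e3 : C3 →ₗ[Q] C2) (e2 : C2 →ₗ[Q] C1) (e1 : C1 →ₗ[Q] C0)
    (h12 : ∀ c, e1 (e2 c) = 0)
    (ex1 : ∀ c, e1 c = 0 → ∃ b, e2 b = c) (ex2 : ∀ c, e2 c = 0 → ∃ b, e3 b = c)
    (x y z : Q) (hr : IsWeaklyRegular Q [x, y, z])
    (hx : ∀ c, ∃ b, e1 b = x • c) (hy : ∀ c, ∃ b, e1 b = y • c) (hz : ∀ c, ∃ b, e1 b = z • c) :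
    (∀ ψ : C0 →ₗ[Q] Q, (∀ c, ψ (e1 c) = 0) → ψ = 0) ∧
    (∀ ψ : C1 →ₗ[Q] Q, (∀ c, ψ (e2 c) = 0) → ∃ θ : C0 →ₗ[Q] Q, ∀ c, ψ c = θ (e1 c)) ∧
    (∀ ψ : C2 →ₗ[Q] Q, (∀ c, ψ (e3 c) = 0) → ∃ θ : C1 →ₗ[Q] Q, ∀ c, ψ c = θ (e2 c)) := by
  rw [isWeaklyRegular_cons_iff, isWeaklyRegular_cons_iff, isWeaklyRegular_singleton_iff] at hr
  obtain ⟨r1, r2, r3⟩ := hr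
  have E0 : ∀ {N : Type _} [AddCommGroup N] [Module Q N] (t : Q) (ht : IsSMulRegular N t)
      (h : ∀ c, ∃ b, e1 b = t • c) (ψ : C0 →ₗ[Q] N), (∀ c, ψ (e1 c) = 0) → ψ = 0 := by
    intro N _ _ t ht h ψ hψ
    ext c
    obtain ⟨b, hb⟩ := h c
    apply ht
    have := hψ b
    rw [hb, map_smul] at this
    simpa using this
  have E1 : ∀ {N : Type _} [AddCommGroup N] [Module Q N] (t t' : Q) (ht : IsSMulRegular N t)
      (ht' : IsSMulRegular (QuotSMulTop t N) t')
      (h : ∀ c, ∃ b, e1 b = t • c) (h' : ∀ c, ∃ b, e1 b = t' • c) (ψ : C1 →ₗ[Q] N),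
      (∀ c, ψ (e2 c) = 0) → ∃ θ : C0 →ₗ[Q] N, ∀ c, ψ c = θ (e1 c) := by
    intro N _ _ t t' ht ht' h h' ψ hψ
    obtain ⟨s, hs⟩ := lift_range e1 (LinearMap.lsmul Q C0 t) h
    refine dual_step t ht e2 e1 (0 : C0 →ₗ[Q] C0) (by simp) s ?_ ?_ ψ hψ
    · intro c
      obtain ⟨b, hb⟩ := ex1 (s (e1 c) - t • c) (by rw [map_sub, hs]; simp)
      exact ⟨b, hb.symm⟩
    · intro θ hθ
      refine ⟨0, fun c => ?_⟩
      rw [E0 t' ht' h' θ hθ]; simp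
  refine ⟨E0 x r1 hx, E1 x y r1 r2 hx hy, ?_⟩
  intro ψ hψ
  obtain ⟨s, hs⟩ := lift_range e1 (LinearMap.lsmul Q C0 x) hx
  obtain ⟨s1, hs1⟩ := lift_range e2 (LinearMap.lsmul Q C1 x - s ∘ₗ e1) (by
    intro c
    apply ex1
    simp [hs])
  refine dual_step x r1 e3 e2 e1 h12 s1 ?_ ?_ ψ hψ
  · intro c
    obtain ⟨b, hb⟩ := ex2 (s1 (e2 c) - x • c) (by rw [map_sub, hs1]; simp [h12])
    exact ⟨b, hb.symm⟩
  · intro θ hθ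
    exact E1 y z r2 r3 hy hz θ hθ

def dot3 {Q : Type*} [CommRing Q] (a : Fin 3 → Q) : (Fin 3 → Q) →ₗ[Q] Q :=
  a 0 • LinearMap.proj 0 + a 1 • LinearMap.proj 1 + a 2 • LinearMap.proj 2

/-- `y ↦ y × a` -/
def cr3 {Q : Type*} [CommRing Q] (a : Fin 3 → Q) : (Fin 3 → Q) →ₗ[Q] (Fin 3 → Q) :=
  LinearMap.pi ![a 2 • LinearMap.proj 1 - a 1 • LinearMap.proj 2,
    a 0 • LinearMap.proj 2 - a 2 • LinearMap.proj 0,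
    a 1 • LinearMap.proj 0 - a 0 • LinearMap.proj 1]

theorem dot3_apply {Q : Type*} [CommRing Q] (a x : Fin 3 → Q) :
    dot3 a x = a 0 * x 0 + a 1 * x 1 + a 2 * x 2 := by simp [dot3]

theorem cr3_apply {Q : Type*} [CommRing Q] (a x : Fin 3 → Q) :
    cr3 a x = ![a 2 * x 1 - a 1 * x 2, a 0 * x 2 - a 2 * x 0, a 1 * x 0 - a 0 * x 1] := by
  ext i; fin_cases i <;> simp [cr3]

theorem dot_cr {Q : Type*} [CommRing Q] (a x : Fin 3 → Q) : dot3 a (cr3 a x) = 0 := by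
  rw [dot3_apply, cr3_apply]; simp; ring

theorem cr_self {Q : Type*} [CommRing Q] (a : Fin 3 → Q) (c : Q) : cr3 a (c • a) = 0 := by
  rw [cr3_apply]; ext i; fin_cases i <;> simp <;> ring

theorem cr_ker {Q : Type*} [CommRing Q] (a : Fin 3 → Q) (h : IsWeaklyRegular Q [a 0, a 1, a 2])
    (x : Fin 3 → Q) (hx : cr3 a x = 0) : ∃ c : Q, c • a = x := by
  rw [weaklyReg3_iff] at h
  obtain ⟨h0, h1, h2⟩ := h
  rw [cr3_apply] at hx
  have e1 : a 0 * x 2 - a 2 * x 0 = 0 := by simpa using congrFun hx 1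
  have e2 : a 1 * x 0 - a 0 * x 1 = 0 := by simpa using congrFun hx 2
  obtain ⟨c, hc⟩ := Ideal.mem_span_singleton'.1
    (h1 (x 0) (Ideal.mem_span_singleton'.2 ⟨x 1, by linear_combination -e2⟩))
  refine ⟨c, ?_⟩
  ext i
  fin_cases i
  · simpa using hc
  · have := h0 (c * a 1 - x 1) (by linear_combination e2 + a 1 * hc)
    simpa using sub_eq_zero.1 this
  · have := h0 (c * a 2 - x 2) (by linear_combination -e1 + a 2 * hc)
    simpa using sub_eq_zero.1 this

theorem dot_ker {Q : Type*} [CommRing Q] (a : Fin 3 → Q) (h : IsWeaklyRegular Q [a 0, a 1, a 2])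
    (x : Fin 3 → Q) (hx : dot3 a x = 0) : ∃ y, cr3 a y = x := by
  rw [weaklyReg3_iff] at h
  obtain ⟨h0, h1, h2⟩ := h
  rw [dot3_apply] at hx
  obtain ⟨p, q, hpq⟩ := Ideal.mem_span_pair.1
    (h2 (x 2) (Ideal.mem_span_pair.2 ⟨-x 0, -x 1, by linear_combination -hx⟩))
  obtain ⟨r, hr⟩ := Ideal.mem_span_singleton'.1
    (h1 (x 1 + q * a 2) (Ideal.mem_span_singleton'.2 ⟨-(x 0 + p * a 2),
      by linear_combination -hx - a 2 * hpq⟩))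
  have e := h0 (x 0 + p * a 2 + r * a 1) (by
    linear_combination hx + a 2 * hpq + a 1 * hr)
  refine ⟨![q, -p, r], ?_⟩
  rw [cr3_apply]
  ext i
  fin_cases i
  · simp; linear_combination -e
  · simp; linear_combination hr
  · simp; linear_combination hpq

theorem dot_mem {Q : Type*} [CommRing Q] (a x : Fin 3 → Q) :
    dot3 a x ∈ Ideal.span {a 0, a 1, a 2} := by
  rw [dot3_apply]
  refine add_mem (add_mem ?_ ?_) ?_ <;> exact Ideal.mul_mem_right _ _ (Ideal.subset_span (by simp))

theorem mem_dot {Q : Type*} [CommRing Q] (a : Fin 3 → Q) (c : Q)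
    (h : c ∈ Ideal.span {a 0, a 1, a 2}) : ∃ x, dot3 a x = c := by
  rw [Ideal.mem_span_insert] at h
  obtain ⟨p, z, hz, rfl⟩ := h
  obtain ⟨q, r, rfl⟩ := Ideal.mem_span_pair.1 hz
  exact ⟨![p, q, r], by rw [dot3_apply]; simp; ring⟩


structure IsRes {Q F1 F2 F3 : Type*} [CommRing Q] [AddCommGroup F1] [Module Q F1]
    [AddCommGroup F2] [Module Q F2] [AddCommGroup F3] [Module Q F3] (I : Ideal Q)
    (d1 : F1 →ₗ[Q] Q) (d2 : F2 →ₗ[Q] F1) (d3 : F3 →ₗ[Q] F2) : Prop where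
  r1 : LinearMap.range d1 = I
  r2 : LinearMap.range d2 = LinearMap.ker d1
  r3 : LinearMap.range d3 = LinearMap.ker d2
  inj : LinearMap.ker d3 = ⊥

namespace IsRes
variable {Q F1 F2 F3 : Type*} [CommRing Q] [AddCommGroup F1] [Module Q F1]
    [AddCommGroup F2] [Module Q F2] [AddCommGroup F3] [Module Q F3] {I : Ideal Q}
    {d1 : F1 →ₗ[Q] Q} {d2 : F2 →ₗ[Q] F1} {d3 : F3 →ₗ[Q] F2}

theorem ex1 (h : IsRes I d1 d2 d3) {x : F1} (hx : d1 x = 0) : ∃ y, d2 y = x := by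
  have : x ∈ LinearMap.range d2 := by rw [h.r2]; exact hx
  exact this
theorem ex2 (h : IsRes I d1 d2 d3) {x : F2} (hx : d2 x = 0) : ∃ y, d3 y = x := by
  have : x ∈ LinearMap.range d3 := by rw [h.r3]; exact hx
  exact this
theorem z1 (h : IsRes I d1 d2 d3) (x : F2) : d1 (d2 x) = 0 := by
  have : d2 x ∈ LinearMap.range d2 := ⟨x, rfl⟩
  rw [h.r2] at this; exact this
theorem z2 (h : IsRes I d1 d2 d3) (x : F3) : d2 (d3 x) = 0 := by
  have : d3 x ∈ LinearMap.range d3 := ⟨x, rfl⟩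
  rw [h.r3] at this; exact this
theorem inj' (h : IsRes I d1 d2 d3) {x y : F3} (hx : d3 x = d3 y) : x = y :=
  LinearMap.ker_eq_bot.1 h.inj hx
theorem mem (h : IsRes I d1 d2 d3) (x : F1) : d1 x ∈ I := by
  rw [← h.r1]; exact ⟨x, rfl⟩
theorem surj (h : IsRes I d1 d2 d3) {c : Q} (hc : c ∈ I) : ∃ x, d1 x = c := by
  rw [← h.r1] at hc; exact hc
end IsRes

def linkE {Q F2 F3 : Type*} [CommRing Q] 
    [AddCommGroup F2] [Module Q F2] [AddCommGroup F3] [Module Q F3] 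
    (d3 : F3 →ₗ[Q] F2) (α2 : (Fin 3 → Q) →ₗ[Q] F2) (a : Fin 3 → Q) :
    (F3 × (Fin 3 → Q)) →ₗ[Q] (F2 × (Fin 3 → Q)) :=
  (d3.coprod α2).prod (-(cr3 a ∘ₗ LinearMap.snd _ _ _))

theorem linkE_apply {Q F2 F3 : Type*} [CommRing Q] 
    [AddCommGroup F2] [Module Q F2] [AddCommGroup F3] [Module Q F3] 
    (d3 : F3 →ₗ[Q] F2) (α2 : (Fin 3 → Q) →ₗ[Q] F2) (a : Fin 3 → Q) (g : F3) (y : Fin 3 → Q) :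
    linkE d3 α2 a (g, y) = (d3 g + α2 y, - cr3 a y) := by
  simp [linkE]

theorem link_colon {Q F1 F2 F3 : Type*} [CommRing Q] [AddCommGroup F1] [Module Q F1]
    [AddCommGroup F2] [Module Q F2] [AddCommGroup F3] [Module Q F3] {I : Ideal Q}
    [Module.Projective Q F1] [Module.Projective Q F2] [Module.Projective Q F3]
    {d1 : F1 →ₗ[Q] Q} {d2 : F2 →ₗ[Q] F1} {d3 : F3 →ₗ[Q] F2} (h : IsRes I d1 d2 d3)
    (a : Fin 3 → Q) (reg : IsWeaklyRegular Q [a 0, a 1, a 2])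
    (α1 : (Fin 3 → Q) →ₗ[Q] F1) (hα1 : ∀ x, d1 (α1 x) = dot3 a x)
    (α2 : (Fin 3 → Q) →ₗ[Q] F2) (hα2 : ∀ y, d2 (α2 y) = α1 (cr3 a y))
    (w : F3) (hw : d3 w = α2 a) :
    LinearMap.range (Module.Dual.eval Q (F3 × (Fin 3 → Q)) (w, -a)) =
      Submodule.colon (Ideal.span {a 0, a 1, a 2}) (I : Set Q) := by
  have h0 := (weaklyReg3_iff _ _ _).1 reg
  apply le_antisymm
  · rintro _ ⟨ψ, rfl⟩
    rw [Submodule.mem_colon]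
    intro c hc
    obtain ⟨v, rfl⟩ := h.surj hc
    obtain ⟨h1, hh1⟩ := lift_range d2 (LinearMap.lsmul Q F1 (d1 v) - d1.smulRight v) (by
      intro p; apply h.ex1; simp [mul_comm])
    obtain ⟨h2, hh2⟩ := lift_range d3 (LinearMap.lsmul Q F2 (d1 v) - h1 ∘ₗ d2) (by
      intro p; apply h.ex2; simp [hh1, h.z1])
    have e : h2 (d3 w) = d1 v • w := by
      apply h.inj'
      rw [hh2]; simp [h.z2]
    have e2 : ψ (w, -a) * d1 v = ψ (h2 (d3 w), 0) + ψ (0, - (d1 v • a)) := by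
      rw [e, ← map_add]; simp
      rw [show (d1 v • w, -(d1 v • a)) = d1 v • (w, -a) by simp, map_smul]; simp [mul_comm]
    change ψ (w, -a) * d1 v ∈ _
    rw [e2, hw]
    have key : ∀ f : (Fin 3 → Q) →ₗ[Q] Q, f a ∈ Ideal.span {a 0, a 1, a 2} := by
      intro f
      have : a = a 0 • ![1, 0, 0] + a 1 • ![0, 1, 0] + a 2 • ![0, 0, 1] := by
        ext i; fin_cases i <;> simp
      have h' : f a = dot3 a ![f ![1, 0, 0], f ![0, 1, 0], f ![0, 0, 1]] := by
        conv_lhs => rw [this, map_add, map_add, map_smul, map_smul, map_smul]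
        rw [dot3_apply]; simp only [smul_eq_mul]; rfl
      rw [h']; exact dot_mem _ _
    refine add_mem ?_ ?_
    · exact key (ψ ∘ₗ LinearMap.inl _ _ _ ∘ₗ h2 ∘ₗ α2)
    · have := key (-(d1 v • ψ ∘ₗ LinearMap.inr _ _ _))
      convert this using 1
      simp only [LinearMap.neg_apply, LinearMap.smul_apply, LinearMap.comp_apply, LinearMap.inr_apply]
      rw [← map_smul, ← map_neg]; simp
  · intro z hz
    rw [Submodule.mem_colon] at hz
    obtain ⟨t1, ht1⟩ := lift_range (dot3 a) (z • d1) (by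
      intro p; apply mem_dot; exact hz _ (h.mem p))
    obtain ⟨t2, ht2⟩ := lift_range (cr3 a) (t1 ∘ₗ d2) (by
      intro p; apply dot_ker a reg; simp [ht1, h.z1])
    obtain ⟨t3, ht3⟩ := lift_range (LinearMap.toSpanSingleton Q _ a) (t2 ∘ₗ d3) (by
      intro p; apply cr_ker a reg; simp [ht2, h.z2])
    obtain ⟨H1, hH1⟩ := lift_range (cr3 a) (t1 ∘ₗ α1 - LinearMap.lsmul Q _ z) (by
      intro p; apply dot_ker a reg; simp [ht1, hα1])
    obtain ⟨H2, hH2⟩ := lift_range (LinearMap.toSpanSingleton Q _ a)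
      (t2 ∘ₗ α2 - LinearMap.lsmul Q _ z - H1 ∘ₗ cr3 a) (by
      intro p; apply cr_ker a reg; simp [ht2, hH1, hα2])
    refine ⟨t3.coprod H2, ?_⟩
    have e1 := hH2 a
    have e2 := ht3 w
    have e3 := cr_self a 1
    simp only [one_smul] at e3
    simp only [LinearMap.toSpanSingleton_apply, LinearMap.sub_apply, LinearMap.comp_apply,
      LinearMap.lsmul_apply, e3, map_zero, sub_zero, ← hw] at e1 e2
    rw [← e2] at e1
    have e4 := congrFun e1 0
    simp only [Pi.smul_apply, Pi.sub_apply, smul_eq_mul] at e4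
    have := h0.1 (t3 w - H2 a - z) (by linear_combination -e4)
    simp only [Module.Dual.eval_apply, LinearMap.coprod_apply, map_neg]
    linear_combination this

theorem link_res {Q F1 F2 F3 : Type*} [CommRing Q] [AddCommGroup F1] [Module Q F1]
    [AddCommGroup F2] [Module Q F2] [AddCommGroup F3] [Module Q F3] {I : Ideal Q}
    [Module.Projective Q F1] [Module.Projective Q F2] [Module.Projective Q F3]
    {d1 : F1 →ₗ[Q] Q} {d2 : F2 →ₗ[Q] F1} {d3 : F3 →ₗ[Q] F2} (h : IsRes I d1 d2 d3)
    (a : Fin 3 → Q) (reg : IsWeaklyRegular Q [a 0, a 1, a 2])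
    (α1 : (Fin 3 → Q) →ₗ[Q] F1) (hα1 : ∀ x, d1 (α1 x) = dot3 a x)
    (α2 : (Fin 3 → Q) →ₗ[Q] F2) (hα2 : ∀ y, d2 (α2 y) = α1 (cr3 a y))
    (w : F3) (hw : d3 w = α2 a) :
    IsRes (Submodule.colon (Ideal.span {a 0, a 1, a 2}) (I : Set Q))
      (Module.Dual.eval Q (F3 × (Fin 3 → Q)) (w, -a)) (linkE d3 α2 a).dualMap
      (d2.coprod α1).dualMap := by
  have hk : ∀ i : Fin 3, ∀ c : F1, ∃ b, (d2.coprod α1) b = a i • c := by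
    intro i c
    obtain ⟨f, hf⟩ := h.ex1 (x := a i • c - α1 (Pi.single i (d1 c))) (by
      simp only [map_sub, map_smul, hα1, dot3_apply]
      fin_cases i <;> simp [mul_comm])
    exact ⟨(f, Pi.single i (d1 c)), by simp [hf]⟩
  have c12 : ∀ c, (d2.coprod α1) (linkE d3 α2 a c) = 0 := by
    rintro ⟨g, y⟩
    rw [linkE_apply]; simp [h.z2, hα2]
  have hw0 : cr3 a a = 0 := by simpa using cr_self a 1
  have c23 : ∀ c : Q, linkE d3 α2 a (c • (w, -a)) = 0 := by
    intro c
    rw [map_smul, linkE_apply]; simp [hw, hw0]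
  obtain ⟨D0, D1, D2⟩ := dual_exact (LinearMap.toSpanSingleton Q _ ((w, -a) : F3 × (Fin 3 → Q)))
    (linkE d3 α2 a) (d2.coprod α1) c12 (by
      rintro ⟨f, x⟩ hfx
      simp only [LinearMap.coprod_apply] at hfx
      obtain ⟨y, rfl⟩ := dot_ker a reg x (by
        have := congrArg d1 hfx
        simpa [h.z1, hα1] using this)
      rw [← hα2, ← map_add] at hfx
      obtain ⟨g, hg⟩ := h.ex2 hfx
      exact ⟨(g, -y), by rw [linkE_apply]; simp [hg]⟩) (by
      rintro ⟨g, y⟩ hgy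
      rw [linkE_apply, Prod.mk_eq_zero] at hgy
      obtain ⟨c, rfl⟩ := cr_ker a reg y (by simpa using hgy.2)
      refine ⟨-c, ?_⟩
      refine Prod.ext ?_ (by simp)
      show (-c) • w = g
      apply h.inj'
      have := hgy.1
      simp only [map_smul] at this
      rw [map_smul, hw, eq_neg_of_add_eq_zero_left this, neg_smul]) (a 0) (a 1) (a 2) reg (hk 0) (hk 1) (hk 2)
  refine ⟨link_colon h a reg α1 hα1 α2 hα2 w hw, ?_, ?_, ?_⟩
  · apply le_antisymm
    · rintro _ ⟨ψ, rfl⟩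
      have := c23 1
      rw [one_smul] at this
      rw [LinearMap.mem_ker, Module.Dual.eval_apply, LinearMap.dualMap_apply, this, map_zero]
    · intro ψ hψ
      rw [LinearMap.mem_ker, Module.Dual.eval_apply] at hψ
      obtain ⟨θ, hθ⟩ := D2 ψ (by intro c; rw [LinearMap.toSpanSingleton_apply, map_smul, hψ, smul_zero])
      exact ⟨θ, LinearMap.ext fun c => (hθ c).symm⟩
  · apply le_antisymm
    · rintro _ ⟨ψ, rfl⟩
      rw [LinearMap.mem_ker]
      apply LinearMap.ext
      intro c
      rw [LinearMap.dualMap_apply, LinearMap.dualMap_apply, c12]; simp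
    · intro ψ hψ
      rw [LinearMap.mem_ker] at hψ
      obtain ⟨θ, hθ⟩ := D1 ψ (fun c => LinearMap.congr_fun hψ c)
      exact ⟨θ, LinearMap.ext fun c => (hθ c).symm⟩
  · rw [LinearMap.ker_eq_bot']
    intro ψ hψ
    exact D0 ψ (fun c => LinearMap.congr_fun hψ c)


/-- `𝔫 M` -/
abbrev nT (Q : Type*) [CommRing Q] [IsLocalRing Q] (M : Type*) [AddCommGroup M] [Module Q M] :
    Submodule Q M := IsLocalRing.maximalIdeal Q • (⊤ : Submodule Q M)

section nTsec
variable {Q : Type*} [CommRing Q] [IsLocalRing Q] {M N : Type*} [AddCommGroup M] [Module Q M]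
  [AddCommGroup N] [Module Q N]

theorem nT_smul {c : Q} (hc : c ∈ IsLocalRing.maximalIdeal Q) (x : M) : c • x ∈ nT Q M :=
  Submodule.smul_mem_smul hc trivial

theorem nT_map (f : M →ₗ[Q] N) {x : M} (hx : x ∈ nT Q M) : f x ∈ nT Q N := by
  have : f x ∈ Submodule.map f (nT Q M) := ⟨x, hx, rfl⟩
  rw [Submodule.map_smul''] at this
  exact Submodule.smul_mono le_rfl le_top this

theorem nT_self {x : Q} : x ∈ nT Q Q ↔ x ∈ IsLocalRing.maximalIdeal Q := by
  simp [nT]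

theorem nT_iff_dual [Module.Free Q M] {x : M} :
    x ∈ nT Q M ↔ ∀ φ : M →ₗ[Q] Q, φ x ∈ IsLocalRing.maximalIdeal Q := by
  constructor
  · intro h φ
    exact nT_self.1 (nT_map φ h)
  · intro h
    let b := Module.Free.chooseBasis Q M
    rw [← b.linearCombination_repr x, Finsupp.linearCombination_apply]
    exact Submodule.sum_mem _ fun i _ => nT_smul (h (b.coord i)) _

theorem nT_dual [Module.Free Q M] [Module.Finite Q M] {ψ : Module.Dual Q M} :
    ψ ∈ nT Q (Module.Dual Q M) ↔ ∀ x, ψ x ∈ IsLocalRing.maximalIdeal Q := by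
  constructor
  · intro h x
    exact nT_self.1 (nT_map (Module.Dual.eval Q M x) h)
  · intro h
    let b := Module.Free.chooseBasis Q M
    have : ψ = ∑ i, ψ (b i) • b.coord i := by
      apply b.ext
      intro j
      simp
    rw [this]
    exact Submodule.sum_mem _ fun i _ => nT_smul (h _) _

theorem nT_pi {p : ℕ} {x : Fin p → Q} :
    x ∈ nT Q (Fin p → Q) ↔ ∀ i, x i ∈ IsLocalRing.maximalIdeal Q := by
  constructor
  · intro h i
    exact nT_self.1 (nT_map (LinearMap.proj i) h)
  · intro h
    rw [pi_eq_sum_univ x]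
    exact Submodule.sum_mem _ fun i _ => nT_smul (h _) _

theorem nT_prod {x : M} {y : N} (hx : x ∈ nT Q M) (hy : y ∈ nT Q N) : (x, y) ∈ nT Q (M × N) := by
  have := add_mem (nT_map (LinearMap.inl Q M N) hx) (nT_map (LinearMap.inr Q M N) hy)
  simpa using this

end nTsec

def Cancel {Q R2 R1 : Type*} [CommRing Q] [IsLocalRing Q] [AddCommGroup R2] [Module Q R2]
    [AddCommGroup R1] [Module Q R1] (d : R2 →ₗ[Q] R1) (p : ℕ) : Prop :=
  ∃ (Λ : R1 →ₗ[Q] (Fin p → Q)) (r : (Fin p → Q) →ₗ[Q] R2), (∀ c, Λ (d (r c)) = c) ∧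
    ∀ x, d x - d (r (Λ (d x))) ∈ nT Q R1

section Cancelsec
variable {Q R1 R2 R3 : Type*} [CommRing Q] [IsLocalRing Q] [AddCommGroup R2] [Module Q R2]
    [AddCommGroup R1] [Module Q R1] [AddCommGroup R3] [Module Q R3]

theorem cancel_dual [Module.Free Q R2] [Module.Finite Q R2] {d : R2 →ₗ[Q] R1} {p : ℕ}
    (h : Cancel d p) : Cancel d.dualMap p := by
  obtain ⟨Λ, r, h1, h2⟩ := h
  refine ⟨LinearMap.pi fun i => Module.Dual.eval Q R2 (r (Pi.single i 1)),
    { toFun := fun c => ∑ i, c i • (LinearMap.proj i ∘ₗ Λ)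
      map_add' := by intro x y; simp [add_smul, Finset.sum_add_distrib]
      map_smul' := by intro c x; simp [mul_smul, Finset.smul_sum] }, ?_, ?_⟩
  · intro c
    ext i
    simp [h1, Pi.single_apply]
  · intro θ
    rw [nT_dual]
    intro x
    have := nT_self.1 (nT_map θ (h2 x))
    convert this using 1
    simp only [map_sub]
    simp only [LinearMap.sub_apply, LinearMap.dualMap_apply, LinearMap.coe_mk, AddHom.coe_mk,
      LinearMap.pi_apply, Module.Dual.eval_apply]
    congr 1
    conv_rhs => rw [pi_eq_sum_univ (Λ (d x))]
    simp only [map_sum, map_smul, LinearMap.sum_apply, LinearMap.smul_apply, LinearMap.comp_apply,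
      LinearMap.proj_apply, smul_eq_mul]
    refine Finset.sum_congr rfl fun i _ => ?_
    rw [mul_comm]
    congr 5
    ext j; simp [Pi.single_apply, eq_comm]

theorem exists_cancel [Module.Free Q R1] {N : ℕ} (e : (Fin N → Q) →ₗ[Q] R1) :
    ∃ p ≤ N, Cancel e p := by
  classical
  let P : ℕ → Prop := fun p => ∃ (Λ : R1 →ₗ[Q] (Fin p → Q)) (r : (Fin p → Q) →ₗ[Q] (Fin N → Q)),
    ∀ c, Λ (e (r c)) = c
  have hP : ∀ p, P p → p ≤ N := by
    rintro p ⟨Λ, r, h⟩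
    have := LinearMap.finrank_le_finrank_of_injective (f := r) (by
      intro a b hab
      rw [← h a, ← h b, hab])
    simpa using this
  have h0 : P 0 := ⟨0, 0, fun c => Subsingleton.elim _ _⟩
  have hspec : P (Nat.findGreatest P N) := Nat.findGreatest_spec (Nat.zero_le _) h0
  refine ⟨Nat.findGreatest P N, Nat.findGreatest_le _, ?_⟩
  obtain ⟨Λ, r, h⟩ := hspec
  refine ⟨Λ, r, h, fun x => ?_⟩
  by_contra hx
  rw [← map_sub, nT_iff_dual] at hx
  push Not at hx
  obtain ⟨φ, hφ⟩ := hx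
  set y := x - r (Λ (e x)) with hy
  have hΛ : Λ (e y) = 0 := by rw [hy, map_sub, map_sub, h, sub_self]
  rw [IsLocalRing.mem_maximalIdeal, mem_nonunits_iff, not_not] at hφ
  obtain ⟨u, hu⟩ := hφ.exists_left_inv
  have hP1 : P (Nat.findGreatest P N + 1) := by
    refine ⟨LinearMap.pi (Fin.cons (u • (φ - φ ∘ₗ e ∘ₗ r ∘ₗ Λ)) fun i => LinearMap.proj i ∘ₗ Λ),
      (LinearMap.toSpanSingleton Q _ y) ∘ₗ LinearMap.proj 0 +
        r ∘ₗ (LinearMap.pi fun i => LinearMap.proj i.succ), fun c => ?_⟩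
    ext i
    have hh : Λ (e (r fun i => c i.succ)) = fun i => c i.succ := h _
    refine Fin.cases ?_ (fun i => ?_) i
    · simp [hΛ]
      change u * (c 0 * φ (e y) + φ (e (r fun i => c i.succ)) - φ (e (r (Λ (e (r fun i => c i.succ)))))) = _
      rw [hh]; linear_combination c 0 * hu
    · simp [hΛ]
      change Λ (e (r fun i => c i.succ)) i = _
      rw [hh]
  have := Nat.le_findGreatest (hP _ hP1) hP1
  omega

theorem ker_split [Module.Free Q R1] [Module.Finite Q R1] {p : ℕ} (Λ : R1 →ₗ[Q] (Fin p → Q))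
    (s : (Fin p → Q) →ₗ[Q] R1) (h : ∀ c, Λ (s c) = c) :
    Module.Finite Q (LinearMap.ker Λ) ∧ Module.Free Q (LinearMap.ker Λ) ∧
    Module.finrank Q (LinearMap.ker Λ) + p = Module.finrank Q R1 ∧
    ∀ x : LinearMap.ker Λ, (x : R1) ∈ nT Q R1 → x ∈ nT Q (LinearMap.ker Λ) := by
  let π : R1 →ₗ[Q] LinearMap.ker Λ := (LinearMap.id - s ∘ₗ Λ).codRestrict _ (by
    intro c; simp [h])
  have hπ : ∀ x : LinearMap.ker Λ, π x = x := by
    intro x; ext; simp [π]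
  have i1 : Module.Finite Q (LinearMap.ker Λ) := Module.Finite.of_surjective π fun x => ⟨x, hπ x⟩
  have i2 : Module.Projective Q (LinearMap.ker Λ) :=
    Module.Projective.of_split (LinearMap.ker Λ).subtype π (LinearMap.ext hπ)
  have i3 : Module.Free Q (LinearMap.ker Λ) := Module.free_of_flat_of_isLocalRing
  refine ⟨i1, i3, ?_, ?_⟩
  · let E : (LinearMap.ker Λ × (Fin p → Q)) ≃ₗ[Q] R1 := LinearEquiv.ofLinearMap
      ((LinearMap.ker Λ).subtype.coprod s) (π.prod Λ) (by
        apply LinearMap.ext; intro x; simp [π]) (by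
        apply LinearMap.ext; rintro ⟨x, y⟩
        refine Prod.ext ?_ ?_
        · ext; simp [π, h]
        · simp [h])
    rw [← E.finrank_eq, Module.finrank_prod]; simp
  · intro x hx
    rw [← hπ x]; exact nT_map π hx

theorem cancelB [Module.Free Q R1] [Module.Finite Q R1] [Module.Free Q R2] [Module.Finite Q R2]
    {I : Ideal Q}
    {d1 : R1 →ₗ[Q] Q} {d2 : R2 →ₗ[Q] R1} {d3 : R3 →ₗ[Q] R2} (h : IsRes I d1 d2 d3)
    {p : ℕ} (hc : Cancel d2 p) (hmin : ∀ x, d3 x ∈ nT Q R2) :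
    ∃ (S1 : Submodule Q R1) (S2 : Submodule Q R2) (e1 : S1 →ₗ[Q] Q) (e2 : S2 →ₗ[Q] S1)
      (e3 : R3 →ₗ[Q] S2), IsRes I e1 e2 e3 ∧ (∀ x, e2 x ∈ nT Q S1) ∧ (∀ x, e3 x ∈ nT Q S2) ∧
      Module.Free Q S1 ∧ Module.Finite Q S1 ∧ Module.Free Q S2 ∧ Module.Finite Q S2 ∧
      Module.finrank Q S1 + p = Module.finrank Q R1 ∧
      Module.finrank Q S2 + p = Module.finrank Q R2 := by
  obtain ⟨Λ, r, h1, h2⟩ := hc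
  obtain ⟨a1, a2, a3, a4⟩ := ker_split Λ (d2 ∘ₗ r) h1
  obtain ⟨b1, b2, b3, b4⟩ := ker_split (Λ ∘ₗ d2) r h1
  refine ⟨LinearMap.ker Λ, LinearMap.ker (Λ ∘ₗ d2), d1 ∘ₗ Submodule.subtype _,
    (d2 ∘ₗ Submodule.subtype _).codRestrict _ (fun c => LinearMap.mem_ker.2 c.2),
    d3.codRestrict _ (fun c => by simp [h.z2]), ⟨?_, ?_, ?_, ?_⟩, ?_, ?_, a2, a1, b2, b1, a3, b3⟩
  · apply le_antisymm
    · rintro _ ⟨x, rfl⟩; exact h.mem _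
    · intro c hc
      obtain ⟨x, rfl⟩ := h.surj hc
      exact ⟨⟨x - d2 (r (Λ x)), by simp [h1]⟩, by simp [h.z1]⟩
  · apply le_antisymm
    · rintro _ ⟨x, rfl⟩; exact h.z1 _
    · rintro ⟨x, hx⟩ hx2
      obtain ⟨y, rfl⟩ := h.ex1 (x := x) (by simpa using hx2)
      exact ⟨⟨y, hx⟩, Subtype.ext rfl⟩
  · apply le_antisymm
    · rintro _ ⟨x, rfl⟩; exact Subtype.ext (h.z2 _)
    · rintro ⟨x, hx⟩ hx2
      obtain ⟨y, rfl⟩ := h.ex2 (x := x) (congrArg Subtype.val hx2)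
      exact ⟨y, Subtype.ext rfl⟩
  · rw [LinearMap.ker_codRestrict, h.inj]
  · rintro ⟨x, hx⟩
    apply a4
    have := h2 x
    have hx' : Λ (d2 x) = 0 := hx
    rw [hx', map_zero, map_zero, sub_zero] at this
    exact this
  · intro x
    apply b4
    simpa using hmin x

theorem toFormat [Module.Free Q R1] [Module.Finite Q R1] [Module.Free Q R2] [Module.Finite Q R2]
    [Module.Free Q R3] [Module.Finite Q R3] {I : Ideal Q}
    {d1 : R1 →ₗ[Q] Q} {d2 : R2 →ₗ[Q] R1} {d3 : R3 →ₗ[Q] R2} (h : IsRes I d1 d2 d3)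
    (hI : I ≤ IsLocalRing.maximalIdeal Q)
    (m2 : ∀ x, d2 x ∈ nT Q R1) (m3 : ∀ x, d3 x ∈ nT Q R2) {m n : ℕ}
    (h1 : Module.finrank Q R1 = m) (h3 : Module.finrank Q R3 = n)
    (h2 : Module.finrank Q R2 = m + n - 1) : HasResolutionFormat I m n := by
  let E1 : R1 ≃ₗ[Q] (Fin m → Q) := LinearEquiv.ofFinrankEq _ _ (by simp [h1])
  let E2 : R2 ≃ₗ[Q] (Fin (m + n - 1) → Q) := LinearEquiv.ofFinrankEq _ _ (by simp [h2])
  let E3 : R3 ≃ₗ[Q] (Fin n → Q) := LinearEquiv.ofFinrankEq _ _ (by simp [h3])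
  refine ⟨d1 ∘ₗ E1.symm.toLinearMap, E1.toLinearMap ∘ₗ d2 ∘ₗ E2.symm.toLinearMap,
    E2.toLinearMap ∘ₗ d3 ∘ₗ E3.symm.toLinearMap, ?_, ?_, ?_, ?_, hI, ?_, ?_⟩
  · apply le_antisymm
    · rintro _ ⟨x, rfl⟩; exact h.mem _
    · intro c hc
      obtain ⟨x, rfl⟩ := h.surj hc
      exact ⟨E1 x, by simp⟩
  · apply le_antisymm
    · rintro _ ⟨x, rfl⟩; simp [h.z1]
    · intro x hx
      obtain ⟨y, hy⟩ := h.ex1 (x := E1.symm x) (by simpa using hx)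
      exact ⟨E2 y, by simp [hy]⟩
  · apply le_antisymm
    · rintro _ ⟨x, rfl⟩; simp [h.z2]
    · intro x hx
      obtain ⟨y, hy⟩ := h.ex2 (x := E2.symm x) (by simpa using hx)
      exact ⟨E3 y, by simp [hy]⟩
  · rw [LinearMap.ker_eq_bot']
    intro x hx
    have : d3 (E3.symm x) = d3 0 := by simpa using hx
    have := h.inj' this
    simpa using this
  · rintro _ ⟨x, rfl⟩
    exact nT_map E1.toLinearMap (m2 _)
  · rintro _ ⟨x, rfl⟩
    exact nT_map E2.toLinearMap (m3 _)

theorem minimize [Module.Free Q R1] [Module.Finite Q R1] [Module.Free Q R2] [Module.Finite Q R2]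
    [Module.Free Q R3] [Module.Finite Q R3] {I : Ideal Q}
    {d1 : R1 →ₗ[Q] Q} {d2 : R2 →ₗ[Q] R1} {d3 : R3 →ₗ[Q] R2} (h : IsRes I d1 d2 d3)
    (hI : I ≤ IsLocalRing.maximalIdeal Q) {p q m n : ℕ} (c2 : Cancel d2 p) (c3 : Cancel d3 q)
    (h1 : Module.finrank Q R1 = m + p) (h3 : Module.finrank Q R3 = n + q)
    (h2 : Module.finrank Q R2 + 1 = m + p + (n + q)) : HasResolutionFormat I m n := by
  obtain ⟨Λ', r', g1, g2⟩ := c2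
  obtain ⟨Λ, r, h1', h2'⟩ := c3
  obtain ⟨a1, a2, a3, a4⟩ := ker_split Λ (d3 ∘ₗ r) h1'
  obtain ⟨b1, b2, b3, b4⟩ := ker_split (Λ ∘ₗ d3) r h1'
  have hr : IsRes I d1 (d2 ∘ₗ (LinearMap.ker Λ).subtype)
      ((d3 ∘ₗ (LinearMap.ker (Λ ∘ₗ d3)).subtype).codRestrict (LinearMap.ker Λ) (fun c => LinearMap.mem_ker.2 c.2)) := by
    refine ⟨h.r1, ?_, ?_, ?_⟩
    · rw [← h.r2]
      apply le_antisymm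
      · rintro _ ⟨x, rfl⟩; exact ⟨x, rfl⟩
      · rintro _ ⟨x, rfl⟩
        exact ⟨⟨x - d3 (r (Λ x)), by simp [h1']⟩, by simp [h.z2]⟩
    · apply le_antisymm
      · rintro _ ⟨x, rfl⟩; exact h.z2 _
      · rintro ⟨x, hx⟩ hx2
        obtain ⟨y, rfl⟩ := h.ex2 (x := x) (by simpa using hx2)
        exact ⟨⟨y, hx⟩, Subtype.ext rfl⟩
    · rw [LinearMap.ker_eq_bot']
      intro x hx
      have : d3 (x : R3) = d3 0 := by rw [map_zero]; exact congrArg Subtype.val hx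
      exact Subtype.ext (h.inj' this)
  obtain ⟨k, hk⟩ := lift_range (d2 ∘ₗ (LinearMap.ker Λ).subtype) (d2 ∘ₗ r') (by
    intro c
    exact ⟨⟨r' c - d3 (r (Λ (r' c))), by simp [h1']⟩, by simp [h.z2]⟩)
  obtain ⟨S1, S2, e1, e2, e3, hr', m2, m3, f1, f2, f3, f4, k1, k2⟩ := cancelB hr
    (p := p) ⟨Λ', k, fun c => by rw [hk]; exact g1 c, fun x => by rw [hk]; exact g2 x⟩ (by
      rintro ⟨x, hx⟩
      apply a4
      have := h2' x
      have hx' : Λ (d3 x) = 0 := hx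
      rw [hx', map_zero, map_zero, sub_zero] at this
      exact this)
  exact toFormat hr' hI m2 m3 (by omega) (by omega) (by omega)

end Cancelsec


theorem cancel_perturb {Q R1 R2 : Type*} [CommRing Q] [IsLocalRing Q] [AddCommGroup R2] [Module Q R2]
    [AddCommGroup R1] [Module Q R1] {d : R2 →ₗ[Q] R1} {p : ℕ}
    (Λ : R1 →ₗ[Q] (Fin p → Q)) (r : (Fin p → Q) →ₗ[Q] R2)
    (h1 : ∀ c, Λ (d (r c)) - c ∈ nT Q (Fin p → Q))
    (h2 : ∀ x, d x - d (r (Λ (d x))) ∈ nT Q R1) : Cancel d p := by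
  let B : (Fin p → Q) →ₗ[Q] (Fin p → Q) := Λ ∘ₗ d ∘ₗ r
  have hs : Function.Surjective B := by
    rw [← LinearMap.range_eq_top, eq_top_iff]
    apply Submodule.le_of_le_smul_of_le_jacobson_bot (I := IsLocalRing.maximalIdeal Q)
      (Module.finite_def.1 inferInstance) (IsLocalRing.maximalIdeal_le_jacobson _)
    intro c _
    have := sub_mem (show B c ∈ LinearMap.range B ⊔ nT Q (Fin p → Q) from
      Submodule.mem_sup_left ⟨c, rfl⟩) (Submodule.mem_sup_right (h1 c))
    simpa [B] using this
  have hb : Function.Bijective B := OrzechProperty.bijective_of_surjective_endomorphism B hs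
  let E := LinearEquiv.ofBijective B hb
  have hE : ∀ c, E.symm (B c) = c := fun c => E.symm_apply_apply c
  refine ⟨E.symm.toLinearMap ∘ₗ Λ, r, fun c => hE c, fun x => ?_⟩
  have e : d x - d (r ((E.symm.toLinearMap ∘ₗ Λ) (d x))) = (d x - d (r (Λ (d x)))) -
      d (r (E.symm (Λ (d x) - B (Λ (d x))))) := by
    rw [map_sub E.symm, hE]; simp
  rw [e]
  refine sub_mem (h2 x) (nT_map (d ∘ₗ r ∘ₗ E.symm.toLinearMap) ?_)
  have := neg_mem (h1 (Λ (d x)))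
  simpa [B] using this

theorem cancel_of {Q R1 R2 : Type*} [CommRing Q] [IsLocalRing Q] [AddCommGroup R2] [Module Q R2]
    [AddCommGroup R1] [Module Q R1] {d : R2 →ₗ[Q] R1} {p : ℕ} (T : (Fin p → Q) →ₗ[Q] R1)
    (Λ : R1 →ₗ[Q] (Fin p → Q)) (r : (Fin p → Q) →ₗ[Q] R2) (hT : ∀ c, Λ (T c) = c)
    (h1 : ∀ c, d (r c) - T c ∈ nT Q R1)
    (h2 : ∀ x, ∃ c, d x - T c ∈ nT Q R1) : Cancel d p := by
  refine cancel_perturb Λ r (fun c => ?_) fun x => ?_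
  · have := nT_map Λ (h1 c)
    rwa [map_sub, hT] at this
  · obtain ⟨c, hc⟩ := h2 x
    have e : d x - d (r (Λ (d x))) = (d x - T c) - (d (r (Λ (d x))) - T (Λ (d x)))
        - T (Λ (d x - T c)) := by
      rw [map_sub Λ, map_sub T, hT]; abel
    rw [e]
    exact sub_mem (sub_mem hc (h1 _)) (nT_map (T ∘ₗ Λ) hc)

theorem frk_dual {Q M : Type*} [CommRing Q] [IsLocalRing Q] [AddCommGroup M] [Module Q M] [Module.Free Q M]
    [Module.Finite Q M] : Module.finrank Q (Module.Dual Q M) = Module.finrank Q M := by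
  classical
  exact (LinearEquiv.finrank_eq (Module.Free.chooseBasis Q M).toDualEquiv).symm

/-- linear combinations of three vectors -/
def lc {Q F : Type*} [CommRing Q] [AddCommGroup F] [Module Q F] (v : Fin 3 → F) :
    (Fin 3 → Q) →ₗ[Q] F := Fintype.linearCombination Q v

theorem lc_apply {Q F : Type*} [CommRing Q] [AddCommGroup F] [Module Q F] (v : Fin 3 → F)
    (c : Fin 3 → Q) : lc v c = c 0 • v 0 + c 1 • v 1 + c 2 • v 2 := by
  simp [lc, Fintype.linearCombination_apply, Fin.sum_univ_three]

theorem d_lc {Q F : Type*} [CommRing Q] [AddCommGroup F] [Module Q F] (d1 : F →ₗ[Q] Q)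
    (v : Fin 3 → F) (c : Fin 3 → Q) : d1 (lc v c) = dot3 (fun i => d1 (v i)) c := by
  rw [lc_apply, dot3_apply]; simp [mul_comm]

section linksec
variable {Q F1 F2 F3 : Type*} [CommRing Q] [IsLocalRing Q] [AddCommGroup F1] [Module Q F1]
    [AddCommGroup F2] [Module Q F2] [AddCommGroup F3] [Module Q F3] {I : Ideal Q}
    {d1 : F1 →ₗ[Q] Q} {d2 : F2 →ₗ[Q] F1} {d3 : F3 →ₗ[Q] F2}

theorem lc_diff {v t : Fin 3 → F1} (h : ∀ i, v i - t i ∈ nT Q F1) (c : Fin 3 → Q) :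
    lc v c - lc t c ∈ nT Q F1 := by
  have : lc v c - lc t c = c 0 • (v 0 - t 0) + c 1 • (v 1 - t 1) + c 2 • (v 2 - t 2) := by
    simp only [lc_apply, smul_sub]; abel
  rw [this]
  exact add_mem (add_mem (Submodule.smul_mem _ _ (h 0)) (Submodule.smul_mem _ _ (h 1)))
    (Submodule.smul_mem _ _ (h 2))

theorem presc [IsNoetherianRing Q] (h : IsRes I d1 d2 d3) (hI : I ≤ IsLocalRing.maximalIdeal Q)
    (hreg : ∃ x y z : Q, x ∈ I ∧ y ∈ I ∧ z ∈ I ∧ IsRegular Q [x, y, z]) (t : Fin 3 → F1) :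
    ∃ v : Fin 3 → F1, (∀ i, v i - t i ∈ nT Q F1) ∧
      IsRegular Q [d1 (v 0), d1 (v 1), d1 (v 2)] := by
  obtain ⟨x, y, z, hx, hy, hz, hr⟩ := hreg
  obtain ⟨n0, h0, n1, h1, n2, h2, hr'⟩ := reg3_coset hr I hI hx hy hz _ _ _ (h.mem (t 0)) (h.mem (t 1))
    (h.mem (t 2))
  have key : ∀ n ∈ IsLocalRing.maximalIdeal Q • I, ∃ u ∈ nT Q F1, d1 u = n := by
    intro n hn
    have : n ∈ Submodule.map d1 (nT Q F1) := by
      rw [Submodule.map_smul'', Submodule.map_top, h.r1]; exact hn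
    exact this
  obtain ⟨u0, hu0, rfl⟩ := key _ h0
  obtain ⟨u1, hu1, rfl⟩ := key _ h1
  obtain ⟨u2, hu2, rfl⟩ := key _ h2
  refine ⟨![t 0 + u0, t 1 + u1, t 2 + u2], ?_, ?_⟩
  · intro i; fin_cases i <;> simpa
  · simpa using hr'

theorem colon_le (h : IsRes I d1 d2 d3) (v : Fin 3 → F1) (φ : F1 →ₗ[Q] Q) (x0 : F1)
    (h0 : φ x0 = 1) (h1 : ∀ y, φ (d2 y) ∈ IsLocalRing.maximalIdeal Q)
    (h2 : ∀ i, φ (v i) ∈ IsLocalRing.maximalIdeal Q) :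
    Submodule.colon (Ideal.span {d1 (v 0), d1 (v 1), d1 (v 2)}) (I : Set Q) ≤
      IsLocalRing.maximalIdeal Q := by
  apply IsLocalRing.le_maximalIdeal
  intro htop
  rw [Ideal.eq_top_iff_one, Submodule.mem_colon] at htop
  have := htop _ (h.mem x0)
  rw [one_smul] at this
  obtain ⟨c, hc⟩ := mem_dot (fun i => d1 (v i)) _ this
  rw [← d_lc] at hc
  obtain ⟨y, hy⟩ := h.ex1 (x := x0 - lc v c) (by rw [map_sub, hc, sub_self])
  have e : φ x0 = φ (d2 y) + (c 0 * φ (v 0) + c 1 * φ (v 1) + c 2 * φ (v 2)) := by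
    rw [hy, map_sub, lc_apply]; simp
  have : (1 : Q) ∈ IsLocalRing.maximalIdeal Q := by
    rw [← h0, e]
    exact add_mem (h1 y) (add_mem (add_mem (Ideal.mul_mem_left _ _ (h2 0))
      (Ideal.mul_mem_left _ _ (h2 1))) (Ideal.mul_mem_left _ _ (h2 2)))
  exact (IsLocalRing.maximalIdeal.isMaximal Q).ne_top ((Ideal.eq_top_iff_one _).2 this)

/-- existence of the comparison map -/
theorem exists_w (h : IsRes I d1 d2 d3) (v : Fin 3 → F1)
    (α2 : (Fin 3 → Q) →ₗ[Q] F2) (hα2 : ∀ y, d2 (α2 y) = lc v (cr3 (fun i => d1 (v i)) y)) :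
    ∃ w, d3 w = α2 (fun i => d1 (v i)) := by
  apply h.ex2
  rw [hα2]
  have := cr_self (fun i => d1 (v i)) 1
  rw [one_smul] at this
  rw [this, map_zero]

theorem exists_α2 (h : IsRes I d1 d2 d3) (v : Fin 3 → F1) :
    ∃ α2 : (Fin 3 → Q) →ₗ[Q] F2, ∀ y, d2 (α2 y) = lc v (cr3 (fun i => d1 (v i)) y) := by
  obtain ⟨k, hk⟩ := lift_range d2 (lc v ∘ₗ cr3 (fun i => d1 (v i))) (by
    intro p; apply h.ex1; rw [LinearMap.comp_apply, d_lc, dot_cr])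
  exact ⟨k, hk⟩

/-- Koszul relation -/
def kos (d1 : F1 →ₗ[Q] Q) (u v : F1) : F1 := d1 u • v - d1 v • u

theorem kos_small (h : IsRes I d1 d2 d3) {u v : F1} (hu : u ∈ nT Q F1) :
    kos d1 u v ∈ Submodule.map d2 (nT Q F2) := by
  refine Submodule.smul_induction_on hu ?_ ?_
  · intro r hr x _
    obtain ⟨y, hy⟩ := h.ex1 (x := kos d1 x v) (by simp [kos, mul_comm])
    refine ⟨r • y, nT_smul hr y, ?_⟩
    rw [map_smul, hy]; simp [kos, smul_sub, smul_smul, mul_comm]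
  · intro x y hx hy
    have : kos d1 (x + y) v = kos d1 x v + kos d1 y v := by
      simp only [kos, map_add, add_smul, smul_add]; abel
    rw [this]; exact add_mem hx hy

theorem kos_swap {u v : F1} : kos d1 u v = - kos d1 v u := by simp [kos]

theorem kos_pert (h : IsRes I d1 d2 d3) {u v u' v' : F1} (hu : u' - u ∈ nT Q F1)
    (hv : v' - v ∈ nT Q F1) (hk : kos d1 u v ∈ Submodule.map d2 (nT Q F2)) :
    kos d1 u' v' ∈ Submodule.map d2 (nT Q F2) := by
  have : kos d1 u' v' = kos d1 u v + kos d1 (u' - u) v - kos d1 (v' - v) u' := by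
    simp only [kos, map_sub, sub_smul, smul_sub]; abel
  rw [this]
  exact sub_mem (add_mem hk (kos_small h hu)) (kos_small h hv)

theorem exists_α2_small (v : Fin 3 → F1)
    (h01 : kos d1 (v 0) (v 1) ∈ Submodule.map d2 (nT Q F2))
    (h12 : kos d1 (v 1) (v 2) ∈ Submodule.map d2 (nT Q F2))
    (h20 : kos d1 (v 2) (v 0) ∈ Submodule.map d2 (nT Q F2)) :
    ∃ α2 : (Fin 3 → Q) →ₗ[Q] F2, (∀ y, d2 (α2 y) = lc v (cr3 (fun i => d1 (v i)) y)) ∧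
      ∀ y, α2 y ∈ nT Q F2 := by
  obtain ⟨k, hk⟩ := lift_range (d2 ∘ₗ (nT Q F2).subtype) (lc v ∘ₗ cr3 (fun i => d1 (v i))) (by
    intro y
    have e : (lc v ∘ₗ cr3 (fun i => d1 (v i))) y = y 0 • kos d1 (v 1) (v 2) +
        y 1 • kos d1 (v 2) (v 0) + y 2 • kos d1 (v 0) (v 1) := by
      rw [LinearMap.comp_apply, lc_apply, cr3_apply]
      simp [kos]
      module
    have := add_mem (add_mem (Submodule.smul_mem _ (y 0) h12) (Submodule.smul_mem _ (y 1) h20))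
      (Submodule.smul_mem _ (y 2) h01)
    rw [← e] at this
    obtain ⟨t, ht, ht2⟩ := this
    exact ⟨⟨t, ht⟩, ht2⟩)
  exact ⟨(nT Q F2).subtype ∘ₗ k, hk, fun y => (k y).2⟩

/-- contains a regular sequence of length three and has the given format -/
def Fmt (I : Ideal Q) (m n : ℕ) : Prop :=
  (∃ x y z : Q, x ∈ I ∧ y ∈ I ∧ z ∈ I ∧ IsRegular Q [x, y, z]) ∧ HasResolutionFormat I m n

theorem colon_reg {a b c : Q} (hr : IsRegular Q [a, b, c]) :
    ∃ x y z : Q, x ∈ Submodule.colon (Ideal.span {a, b, c}) (I : Set Q) ∧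
      y ∈ Submodule.colon (Ideal.span {a, b, c}) (I : Set Q) ∧
      z ∈ Submodule.colon (Ideal.span {a, b, c}) (I : Set Q) ∧ IsRegular Q [x, y, z] := by
  refine ⟨a, b, c, ?_, ?_, ?_, hr⟩ <;> rw [Submodule.mem_colon] <;> intro i _ <;>
    exact Ideal.mul_mem_right _ _ (Ideal.subset_span (by simp))

theorem link_direct (h : IsRes I d1 d2 d3) (v : Fin 3 → F1)
    (hr : IsRegular Q [d1 (v 0), d1 (v 1), d1 (v 2)]) :
    DirectlyLinked I (Submodule.colon (Ideal.span {d1 (v 0), d1 (v 1), d1 (v 2)}) (I : Set Q)) :=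
  ⟨_, _, _, h.mem _, h.mem _, h.mem _, hr, rfl⟩

theorem link_format [Module.Free Q F1] [Module.Finite Q F1] [Module.Free Q F2] [Module.Finite Q F2]
    [Module.Free Q F3] [Module.Finite Q F3] (h : IsRes I d1 d2 d3) (v : Fin 3 → F1)
    (hr : IsRegular Q [d1 (v 0), d1 (v 1), d1 (v 2)])
    (α2 : (Fin 3 → Q) →ₗ[Q] F2) (hα2 : ∀ y, d2 (α2 y) = lc v (cr3 (fun i => d1 (v i)) y))
    {p c m n : ℕ} (c1 : Cancel (d2.coprod (lc v)) p)
    (c2 : Cancel (linkE d3 α2 (fun i => d1 (v i))) c)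
    (hJ : Submodule.colon (Ideal.span {d1 (v 0), d1 (v 1), d1 (v 2)}) (I : Set Q) ≤
      IsLocalRing.maximalIdeal Q)
    (h1 : Module.finrank Q F1 = n + p) (h3 : Module.finrank Q F3 + 3 = m + c)
    (h2 : Module.finrank Q F2 + 1 = Module.finrank Q F1 + Module.finrank Q F3) :
    Fmt (Submodule.colon (Ideal.span {d1 (v 0), d1 (v 1), d1 (v 2)}) (I : Set Q)) m n := by
  obtain ⟨w, hw⟩ := exists_w h v α2 hα2
  have := link_res h (fun i => d1 (v i)) hr.toIsWeaklyRegular (lc v) (d_lc d1 v) α2 hα2 w hw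
  refine ⟨colon_reg hr, minimize this hJ (cancel_dual c2) (cancel_dual c1) ?_ ?_ ?_⟩
  · rw [frk_dual, Module.finrank_prod]; simp; omega
  · rw [frk_dual, h1]
  · rw [frk_dual, Module.finrank_prod]; simp; omega

end linksec


section steps
variable {Q : Type*} [CommRing Q] [IsLocalRing Q]

theorem cancel_linkE {F2 F3 : Type*} [AddCommGroup F2] [Module Q F2] [AddCommGroup F3] [Module Q F3]
    {d3 : F3 →ₗ[Q] F2} {α2 : (Fin 3 → Q) →ₗ[Q] F2} {a : Fin 3 → Q}
    (ha : ∀ i, a i ∈ IsLocalRing.maximalIdeal Q) (hα2 : ∀ y, α2 y ∈ nT Q F2) {p : ℕ}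
    (hc : Cancel d3 p) : Cancel (linkE d3 α2 a) p := by
  obtain ⟨Λ, r, h1, h2⟩ := hc
  refine ⟨Λ ∘ₗ LinearMap.fst _ _ _, LinearMap.inl _ _ _ ∘ₗ r, fun c => ?_, ?_⟩
  · simp [linkE_apply, h1]
  · rintro ⟨g, y⟩
    simp only [linkE_apply, LinearMap.comp_apply, LinearMap.fst_apply, LinearMap.inl_apply, map_zero,
      add_zero, neg_zero, Prod.mk_sub_mk, sub_zero]
    refine nT_prod ?_ (neg_mem ?_)
    · have : d3 g + α2 y - d3 (r (Λ (d3 g + α2 y))) = (d3 g - d3 (r (Λ (d3 g)))) +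
          (α2 y - (d3 ∘ₗ r ∘ₗ Λ) (α2 y)) := by
        simp only [map_add, LinearMap.comp_apply]; abel
      rw [this]
      exact add_mem (h2 g) (sub_mem (hα2 y) (nT_map _ (hα2 y)))
    · rw [cr3_apply, nT_pi]
      intro i
      fin_cases i <;> exact sub_mem (Ideal.mul_mem_right _ _ (ha _)) (Ideal.mul_mem_right _ _ (ha _))

theorem cancel_linkE' {F2 F3 : Type*} [AddCommGroup F2] [Module Q F2] [AddCommGroup F3] [Module Q F3]
    {d3 : F3 →ₗ[Q] F2} {α2 : (Fin 3 → Q) →ₗ[Q] F2} {a : Fin 3 → Q}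
    (ha : ∀ i, a i ∈ IsLocalRing.maximalIdeal Q) (hd : ∀ y, d3 y ∈ nT Q F2) {p : ℕ}
    (hc : Cancel α2 p) : Cancel (linkE d3 α2 a) p := by
  obtain ⟨Λ, r, h1, h2⟩ := hc
  have hcr : ∀ y, cr3 a y ∈ nT Q (Fin 3 → Q) := by
    intro y
    rw [cr3_apply, nT_pi]
    intro i
    fin_cases i <;> exact sub_mem (Ideal.mul_mem_right _ _ (ha _)) (Ideal.mul_mem_right _ _ (ha _))
  refine ⟨Λ ∘ₗ LinearMap.fst _ _ _, LinearMap.inr _ _ _ ∘ₗ r, fun c => ?_, ?_⟩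
  · simp [linkE_apply, h1]
  · rintro ⟨g, y⟩
    simp only [linkE_apply, LinearMap.comp_apply, LinearMap.fst_apply, LinearMap.inr_apply, map_zero,
      zero_add, Prod.mk_sub_mk]
    refine nT_prod ?_ (sub_mem (neg_mem (hcr _)) (neg_mem (hcr _)))
    have : d3 g + α2 y - α2 (r (Λ (d3 g + α2 y))) = (d3 g - (α2 ∘ₗ r ∘ₗ Λ) (d3 g)) +
          (α2 y - α2 (r (Λ (α2 y)))) := by
        simp only [map_add, LinearMap.comp_apply]; abel
    rw [this]
    exact add_mem (sub_mem (hd g) (nT_map _ (hd g))) (h2 y)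

theorem cancel_zero {R1 R2 : Type*} [AddCommGroup R2] [Module Q R2]
    [AddCommGroup R1] [Module Q R1] {d : R2 →ₗ[Q] R1} (h : ∀ x, d x ∈ nT Q R1) : Cancel d 0 :=
  ⟨0, 0, fun _ => Subsingleton.elim _ _, fun x => by simpa using h x⟩

theorem reg3_mem' {a : Fin 3 → Q} (h : IsRegular Q [a 0, a 1, a 2]) (i : Fin 3) :
    a i ∈ IsLocalRing.maximalIdeal Q := by
  obtain ⟨h0, h1, h2⟩ := reg3_mem h
  fin_cases i <;> assumption

variable [IsNoetherianRing Q]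

theorem S0 {I : Ideal Q} {m n : ℕ} (h : Fmt I m n) (hm : 1 ≤ m) :
    ∃ J, Linked I J ∧ Fmt J (n + 3) m := by
  obtain ⟨hreg, d1, d2, d3, r1, r2, r3, inj, hI, m2, m3⟩ := h
  have hR : IsRes I d1 d2 d3 := ⟨r1, r2, r3, inj⟩
  obtain ⟨v, hv, hr⟩ := presc hR hI hreg 0
  have hv' : ∀ i, v i ∈ nT Q _ := by intro i; simpa using hv i
  obtain ⟨α2, hα2, hs⟩ := exists_α2_small (d1 := d1) (d2 := d2) v (kos_small hR (hv' 0))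
    (kos_small hR (hv' 1)) (kos_small hR (hv' 2))
  refine ⟨_, Relation.ReflTransGen.single (link_direct hR v hr),
    link_format hR v hr α2 hα2 (p := 0) (c := 0) (cancel_zero ?_)
      (cancel_linkE (reg3_mem' hr) hs (cancel_zero fun x => m3 ⟨x, rfl⟩)) ?_ ?_ ?_ ?_⟩
  · rintro ⟨x, c⟩
    rw [LinearMap.coprod_apply]
    have := lc_diff (t := 0) hv c
    simp only [lc_apply 0, Pi.zero_apply, smul_zero, add_zero, sub_zero] at this
    exact add_mem (m2 ⟨x, rfl⟩) this
  · refine colon_le hR v (LinearMap.proj ⟨0, hm⟩) (Pi.single ⟨0, hm⟩ 1) (by simp) (fun y => ?_) (fun i => ?_)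
    · exact nT_self.1 (nT_map _ (m2 ⟨y, rfl⟩))
    · exact nT_self.1 (nT_map _ (hv' i))
  · simp
  · simp
  · simp; omega

theorem S3 {I : Ideal Q} {m n : ℕ} (h : Fmt I m n) (hm : 4 ≤ m) :
    ∃ c ≤ 3, ∃ J, Linked I J ∧ Fmt J (n + 3 - c) (m - 3) := by
  obtain ⟨hreg, d1, d2, d3, r1, r2, r3, inj, hI, m2, m3⟩ := h
  have hR : IsRes I d1 d2 d3 := ⟨r1, r2, r3, inj⟩
  have h3m : 3 ≤ m := by omega
  let t : Fin 3 → (Fin m → Q) := fun i => Pi.single (Fin.castLE h3m i) 1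
  obtain ⟨v, hv, hr⟩ := presc hR hI hreg t
  obtain ⟨α2, hα2⟩ := exists_α2 hR v
  obtain ⟨c, hc3, hc⟩ := exists_cancel α2
  refine ⟨c, hc3, _, Relation.ReflTransGen.single (link_direct hR v hr),
    link_format hR v hr α2 hα2 (p := 3) (c := c) ?_
      (cancel_linkE' (reg3_mem' hr) (fun x => m3 ⟨x, rfl⟩) hc) ?_ ?_ ?_ ?_⟩
  · refine cancel_of (lc t) (LinearMap.pi fun i => LinearMap.proj (Fin.castLE h3m i))
      (LinearMap.inr _ _ _) ?_ ?_ ?_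
    · intro c; ext i
      fin_cases i <;> simp [lc_apply, t, Pi.single_apply, Fin.ext_iff]
    · intro c
      simpa using lc_diff hv c
    · rintro ⟨x, c⟩
      refine ⟨c, ?_⟩
      rw [LinearMap.coprod_apply, add_sub_assoc]
      exact add_mem (m2 ⟨x, rfl⟩) (lc_diff hv c)
  · refine colon_le hR v (LinearMap.proj ⟨3, hm⟩) (Pi.single ⟨3, hm⟩ 1) (by simp) (fun y => ?_) (fun i => ?_)
    · exact nT_self.1 (nT_map _ (m2 ⟨y, rfl⟩))
    · have := nT_self.1 (nT_map (LinearMap.proj ⟨3, hm⟩) (hv i))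
      fin_cases i <;> simpa [t, Pi.single_apply, Fin.ext_iff] using this
  · simp; omega
  · simp; omega
  · simp; omega

theorem S1 {I : Ideal Q} {m n : ℕ} (h : Fmt I m n) (hm : 2 ≤ m) (hn : 2 ≤ n) :
    ∃ J, Linked I J ∧ Fmt J (m + 1) n := by
  obtain ⟨hreg, d1, d2, d3, r1, r2, r3, inj, hI, m2, m3⟩ := h
  have hR : IsRes I d1 d2 d3 := ⟨r1, r2, r3, inj⟩
  let t : Fin 3 → (Fin m → Q) := ![Pi.single ⟨0, by omega⟩ 1, Pi.single ⟨1, by omega⟩ 1, 0]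
  obtain ⟨v', hv', hr'⟩ := presc hR hI hreg t
  obtain ⟨β2, hβ2⟩ := exists_α2 hR v'
  obtain ⟨w', hw'⟩ := exists_w hR v' β2 hβ2
  set s := d1 (v' 2) with hs
  have hsn : s ∈ IsLocalRing.maximalIdeal Q := (reg3_mem hr').2.2
  let v : Fin 3 → (Fin m → Q) := ![v' 0, v' 1, s • v' 2]
  have hr : IsRegular Q [d1 (v 0), d1 (v 1), d1 (v 2)] := by
    have := reg3_sq hr'
    simpa [v] using this
  let δ : (Fin 3 → Q) →ₗ[Q] (Fin 3 → Q) :=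
    LinearMap.pi ![s • LinearMap.proj 0, s • LinearMap.proj 1, LinearMap.proj 2]
  have hδ : ∀ y, δ y = ![s * y 0, s * y 1, y 2] := by
    intro y; ext i; fin_cases i <;> simp [δ]
  let α2 := β2 ∘ₗ δ
  set a : Fin 3 → Q := fun i => d1 (v i) with ha
  have hα2 : ∀ y, d2 (α2 y) = lc v (cr3 a y) := by
    intro y
    simp only [α2, LinearMap.comp_apply, hβ2, hδ]
    rw [lc_apply, lc_apply, cr3_apply, cr3_apply]
    simp [v, ha, ← hs]
    module
  have hw : d3 (s • w') = α2 a := by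
    rw [map_smul, hw', ← map_smul]
    simp only [α2, LinearMap.comp_apply, hδ]
    congr 1
    ext i; fin_cases i <;> simp [ha, v, ← hs]
  have han : ∀ i, a i ∈ IsLocalRing.maximalIdeal Q := reg3_mem' hr
  have hJ := link_res hR a hr.toIsWeaklyRegular (lc v) (d_lc d1 v) α2 hα2 (s • w') hw
  set J := Submodule.colon (Ideal.span {a 0, a 1, a 2}) (I : Set Q) with hJdef
  set w := s • w' with hwdef
  set D1 := Module.Dual.eval Q ((Fin n → Q) × (Fin 3 → Q)) (w, -a) with hD1
  have hD1n : ∀ ψ, D1 ψ ∈ IsLocalRing.maximalIdeal Q := by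
    intro ψ
    rw [hD1, Module.Dual.eval_apply]
    exact nT_self.1 (nT_map ψ (nT_prod (nT_smul hsn _) (neg_mem (nT_pi.2 han))))
  have hJn : J ≤ IsLocalRing.maximalIdeal Q := by
    intro c hc
    obtain ⟨ψ, rfl⟩ := hJ.surj hc
    exact hD1n ψ
  have c0 : Cancel (d2.coprod (lc v)) 2 := by
    have hd : ∀ c : Fin 2 → Q, c 0 • v' 0 + c 1 • v' 1 - (c 0 • t 0 + c 1 • t 1) ∈ nT Q _ := by
      intro c
      have : c 0 • v' 0 + c 1 • v' 1 - (c 0 • t 0 + c 1 • t 1) =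
        c 0 • (v' 0 - t 0) + c 1 • (v' 1 - t 1) := by simp only [smul_sub]; abel
      rw [this]
      exact add_mem (Submodule.smul_mem _ _ (hv' 0)) (Submodule.smul_mem _ _ (hv' 1))
    refine cancel_of (p := 2) ((LinearMap.toSpanSingleton Q _ (t 0)) ∘ₗ LinearMap.proj 0 +
        (LinearMap.toSpanSingleton Q _ (t 1)) ∘ₗ LinearMap.proj 1)
      (LinearMap.pi ![LinearMap.proj ⟨0, by omega⟩, LinearMap.proj ⟨1, by omega⟩])
      (LinearMap.inr _ _ _ ∘ₗ LinearMap.pi ![LinearMap.proj 0, LinearMap.proj 1, 0]) ?_ ?_ ?_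
    · intro c; ext i
      fin_cases i <;> simp [t]
    · intro c
      have := hd c
      simpa [lc_apply, v] using this
    · rintro ⟨x, c⟩
      refine ⟨![c 0, c 1], ?_⟩
      have h1 := hd ![c 0, c 1]
      have h2 : c 2 • s • v' 2 ∈ nT Q (Fin m → Q) := Submodule.smul_mem _ _ (nT_smul hsn _)
      have h3 := add_mem (m2 ⟨x, rfl⟩) (add_mem h1 h2)
      convert h3 using 1
      simp [lc_apply, v]
      abel
  -- the three special generators
  let ε : Module.Dual Q ((Fin n → Q) × (Fin 3 → Q)) := LinearMap.proj 2 ∘ₗ LinearMap.snd _ _ _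
  let φ : Fin n → Module.Dual Q ((Fin n → Q) × (Fin 3 → Q)) :=
    fun i => LinearMap.proj i ∘ₗ LinearMap.fst _ _ _
  let T : Fin 3 → Module.Dual Q ((Fin n → Q) × (Fin 3 → Q)) := ![ε, φ ⟨0, by omega⟩, φ ⟨1, by omega⟩]
  have hk : ∀ u u' b : Module.Dual Q ((Fin n → Q) × (Fin 3 → Q)), kos D1 u u' = s • b → D1 b = 0 →
      kos D1 u u' ∈ Submodule.map (linkE d3 α2 a).dualMap (nT Q _) := by
    intro u u' b hb hb0
    obtain ⟨θ, rfl⟩ := hJ.ex1 hb0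
    exact ⟨s • θ, nT_smul hsn _, by rw [map_smul, hb]⟩
  have eε : D1 ε = -(s * s) := by
    simp [hD1, Module.Dual.eval_apply, ε, ha, v, ← hs]
  have eφ : ∀ i, D1 (φ i) = s * w' i := by
    intro i
    simp [hD1, Module.Dual.eval_apply, φ, hwdef]
  have k01 : ∀ i, kos D1 ε (φ i) ∈ Submodule.map (linkE d3 α2 a).dualMap (nT Q _) := by
    intro i
    apply hk _ _ (-(s • φ i) - w' i • ε)
    · simp only [kos, eε, eφ]; module
    · simp only [map_sub, map_neg, map_smul, eε, eφ, smul_eq_mul]; ring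
  have k12 : ∀ i j, kos D1 (φ i) (φ j) ∈ Submodule.map (linkE d3 α2 a).dualMap (nT Q _) := by
    intro i j
    apply hk _ _ (w' i • φ j - w' j • φ i)
    · simp only [kos, eφ]; module
    · simp only [map_sub, map_smul, eφ, smul_eq_mul]; ring
  obtain ⟨V, hV, hrV⟩ := presc hJ hJn (colon_reg hr) T
  obtain ⟨γ2, hγ2, hγs⟩ := exists_α2_small (d1 := D1) (d2 := (linkE d3 α2 a).dualMap) V
    (kos_pert hJ (hV 0) (hV 1) (k01 _)) (kos_pert hJ (hV 1) (hV 2) (k12 _ _))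
    (kos_pert hJ (hV 2) (hV 0) (by rw [kos_swap]; exact neg_mem (k01 _)))
  have hα2n : ∀ y, α2 y - y 2 • β2 ![0, 0, 1] ∈ nT Q _ := by
    intro y
    have : α2 y - y 2 • β2 ![0, 0, 1] = s • β2 ![y 0, y 1, 0] := by
      simp only [α2, LinearMap.comp_apply, hδ]
      rw [← map_smul, ← map_smul, ← map_sub]
      congr 1
      ext i; fin_cases i <;> simp
    rw [this]
    exact nT_smul hsn _
  have hD2 : ∀ ψ : Module.Dual Q ((Fin (m + n - 1) → Q) × (Fin 3 → Q)), ∀ g y,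
      (linkE d3 α2 a).dualMap ψ (g, y) - y 2 * ψ (β2 ![0, 0, 1], 0) ∈ IsLocalRing.maximalIdeal Q := by
    intro ψ g y
    have hcr : cr3 a y ∈ nT Q (Fin 3 → Q) := by
      rw [cr3_apply, nT_pi]
      intro i
      fin_cases i <;> exact sub_mem (Ideal.mul_mem_right _ _ (han _)) (Ideal.mul_mem_right _ _ (han _))
    have h1 := nT_self.1 (nT_map ψ (nT_prod (add_mem (m3 ⟨g, rfl⟩) (hα2n y)) (neg_mem hcr)))
    convert h1 using 1
    rw [LinearMap.dualMap_apply, linkE_apply, ← smul_eq_mul, ← map_smul, ← map_sub]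
    congr 1
    simp [add_sub_assoc]
  refine ⟨_, (Relation.ReflTransGen.single (link_direct hR v hr)).tail (link_direct hJ V hrV),
    link_format hJ V hrV γ2 hγ2 (p := 3) (c := 2) ?_
      (cancel_linkE (reg3_mem' hrV) hγs (cancel_dual c0)) ?_ ?_ ?_ ?_⟩
  · refine cancel_of (lc T) (LinearMap.pi ![Module.Dual.eval Q _ (0, Pi.single 2 1),
      Module.Dual.eval Q _ (Pi.single ⟨0, by omega⟩ 1, 0),
      Module.Dual.eval Q _ (Pi.single ⟨1, by omega⟩ 1, 0)]) (LinearMap.inr _ _ _) ?_ ?_ ?_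
    · intro c; ext i
      fin_cases i <;> simp [lc_apply, T, ε, φ, Module.Dual.eval_apply]
    · intro c
      simpa using lc_diff hV c
    · rintro ⟨ψ, c⟩
      refine ⟨c + ![ψ (β2 ![0, 0, 1], 0), 0, 0], ?_⟩
      rw [LinearMap.coprod_apply, map_add]
      have h1 := lc_diff hV c
      have h2 : (linkE d3 α2 a).dualMap ψ - lc T ![ψ (β2 ![0, 0, 1], 0), 0, 0] ∈ nT Q _ := by
        rw [nT_dual]
        rintro ⟨g, y⟩
        have := hD2 ψ g y
        rw [mul_comm] at this
        rw [lc_apply, LinearMap.sub_apply]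
        simpa [T, ε] using this
      have h3 := add_mem h1 h2
      convert h3 using 1
      abel
  · refine colon_le hJ V (Module.Dual.eval Q _ (0, Pi.single 0 1))
      (LinearMap.proj 0 ∘ₗ LinearMap.snd _ _ _) (by simp [Module.Dual.eval_apply]) (fun y => ?_) (fun i => ?_)
    · have := hD2 y 0 (Pi.single 0 1)
      simpa using this
    · have := nT_self.1 (nT_map (Module.Dual.eval Q _ (0, Pi.single 0 1)) (hV i))
      rw [map_sub] at this
      fin_cases i <;> simpa [T, ε, φ, Module.Dual.eval_apply] using this
  · rw [frk_dual, Module.finrank_prod]; simp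
  · rw [frk_dual]; simp
  · rw [frk_dual, frk_dual, frk_dual, Module.finrank_prod, Module.finrank_prod]; simp; omega

end steps


section chain
variable {Q : Type*} [CommRing Q] [IsLocalRing Q]

theorem koszul_fmt {x y z : Q} (h : IsRegular Q [x, y, z]) : Fmt (Ideal.span {x, y, z}) 3 1 := by
  have hm := reg3_mem h
  let a : Fin 3 → Q := ![x, y, z]
  have hr : IsRegular Q [a 0, a 1, a 2] := h
  have han : ∀ i, a i ∈ IsLocalRing.maximalIdeal Q := reg3_mem' hr
  have hw := hr.toIsWeaklyRegular
  refine ⟨⟨x, y, z, Ideal.subset_span (by simp), Ideal.subset_span (by simp),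
    Ideal.subset_span (by simp), h⟩, ?_⟩
  have hR : IsRes (Ideal.span {x, y, z}) (dot3 a) (cr3 a) (LinearMap.toSpanSingleton Q _ a) := by
    refine ⟨?_, ?_, ?_, ?_⟩
    · apply le_antisymm
      · rintro _ ⟨c, rfl⟩; exact dot_mem a c
      · intro c hc; exact mem_dot a c hc
    · apply le_antisymm
      · rintro _ ⟨c, rfl⟩; exact dot_cr a c
      · intro c hc; exact dot_ker a hw c hc
    · apply le_antisymm
      · rintro _ ⟨c, rfl⟩; exact cr_self a c
      · intro c hc; exact cr_ker a hw c hc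
    · rw [LinearMap.ker_eq_bot']
      intro c hc
      have := congrFun hc 0
      apply ((weaklyReg3_iff _ _ _).1 hw).1
      simpa [mul_comm] using this
  refine toFormat hR ?_ ?_ ?_ (by simp) (by simp) (by simp)
  · rw [Ideal.span_le]
    rintro c (rfl | rfl | rfl)
    · exact hm.1
    · exact hm.2.1
    · exact hm.2.2
  · intro c
    rw [cr3_apply, nT_pi]
    intro i
    fin_cases i <;> exact sub_mem (Ideal.mul_mem_right _ _ (han _)) (Ideal.mul_mem_right _ _ (han _))
  · intro c
    rw [LinearMap.toSpanSingleton_apply]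
    exact Submodule.smul_mem _ _ (nT_pi.2 han)

/-- some ideal of the given format is linked to `I` -/
def Reach (I : Ideal Q) (m n : ℕ) : Prop := ∃ J, Linked I J ∧ Fmt J m n

theorem Reach.bind {I : Ideal Q} {m n m' n' : ℕ} (h : Reach I m n)
    (h2 : ∀ J : Ideal Q, Fmt J m n → Reach J m' n') : Reach I m' n' := by
  obtain ⟨J, hJ, hf⟩ := h
  obtain ⟨K, hK, hf'⟩ := h2 J hf
  exact ⟨K, hJ.trans hK, hf'⟩

variable [IsNoetherianRing Q]

theorem S1s {m n : ℕ} (hm : 2 ≤ m) (hn : 2 ≤ n) {m' : ℕ} (h : m ≤ m') :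
    ∀ I : Ideal Q, Fmt I m n → Reach I m' n := by
  induction m', h using Nat.le_induction with
  | base => exact fun I hI => ⟨I, .refl, hI⟩
  | succ k hk ih => exact fun I hI => (ih I hI).bind fun J hJ => S1 hJ (by omega) hn

theorem S2 {m n : ℕ} (hm : 5 ≤ m) (hn : 2 ≤ n) (I : Ideal Q) (h : Fmt I m n) :
    Reach I m (n + 1) := by
  obtain ⟨c, hc, h1⟩ := S3 h (by omega)
  refine (Reach.bind h1 (S1s (m' := n + 4) (by omega) (by omega) (by omega))).bind fun J hJ => ?_
  obtain ⟨c', hc', h2⟩ := S3 hJ (by omega)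
  rw [show n + 4 - 3 = n + 1 by omega] at h2
  exact Reach.bind h2 (S1s (by omega) (by omega) (by omega))

theorem S2s {m n : ℕ} (hm : 5 ≤ m) (hn : 2 ≤ n) {n' : ℕ} (h : n ≤ n') :
    ∀ I : Ideal Q, Fmt I m n → Reach I m n' := by
  induction n', h using Nat.le_induction with
  | base => exact fun I hI => ⟨I, .refl, hI⟩
  | succ k hk ih => exact fun I hI => (ih I hI).bind fun J hJ => S2 hm (by omega) J hJ

theorem reach55 (I : Ideal Q) (h : Fmt I 8 2) : Reach I 5 5 := by
  obtain ⟨c, hc, h1⟩ := S3 h (by omega)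
  exact Reach.bind h1 (S1s (by omega) (by omega) (by omega))

theorem reach_all {m n : ℕ} (hm : 3 ≤ m) (hn : 1 ≤ n)
    (h : 2 * (m + n - 1) ≤ (m - 2) * (n + 1)) :
    (∀ I : Ideal Q, Fmt I 6 3 → Reach I m n) ∨ (∀ I : Ideal Q, Fmt I 8 2 → Reach I m n) := by
  have key : (6 ≤ m ∧ 3 ≤ n) ∨ (8 ≤ m ∧ n = 2) ∨ (m = 5 ∧ 5 ≤ n) := by
    obtain ⟨k, rfl⟩ := Nat.exists_eq_add_of_le hm
    rw [show 3 + k - 2 = k + 1 by omega] at h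
    rcases Nat.lt_or_ge k 3 with hk | hk
    · interval_cases k <;> omega
    · rcases Nat.lt_or_ge n 3 with hn3 | hn3
      · interval_cases n <;> omega
      · left; omega
  rcases key with ⟨h1, h2⟩ | ⟨h1, rfl⟩ | ⟨rfl, h2⟩
  · left
    exact fun I hI => (S1s (by omega) (by omega) h1 I hI).bind (S2s (by omega) (by omega) h2)
  · right
    exact fun I hI => S1s (by omega) (by omega) h1 I hI
  · right
    exact fun I hI => (reach55 I hI).bind (S2s (by omega) (by omega) h2)

theorem exists63 {x y z : Q} (h : IsRegular Q [x, y, z]) :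
    (∃ I : Ideal Q, Fmt I 6 3) ∧ (∃ I : Ideal Q, Fmt I 8 2) := by
  obtain ⟨J, -, hJ⟩ := S0 (koszul_fmt h) (by omega)
  constructor
  · obtain ⟨K, -, hK⟩ := S1s (m' := 6) (by omega) (by omega) (by omega) J hJ
    exact ⟨K, hK⟩
  · obtain ⟨K, -, hK⟩ := S1s (m' := 5) (by omega) (by omega) (by omega) J hJ
    obtain ⟨c, hc, L, -, hL⟩ := S3 hK (by omega)
    obtain ⟨M, -, hM⟩ := S1s (m' := 8) (by omega) (by omega) (by omega) L hL
    exact ⟨M, hM⟩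

theorem final_step {m n m' n' : ℕ} (hm : 3 ≤ m) (hn : 1 ≤ n)
    (hl : ∀ I : Ideal Q, IsGrade3PerfectOfFormat I m n → Licci I)
    (h : ∀ I : Ideal Q, Fmt I m' n' → Reach I m n) (I : Ideal Q)
    (hI : IsGrade3PerfectOfFormat I m' n') : Licci I := by
  obtain ⟨J, hJ, hf⟩ := h I ⟨hI.1, hI.2.2.2⟩
  obtain ⟨C, hC, hreg⟩ := hl J ⟨hf.1, hm, hn, hf.2⟩
  exact ⟨C, hJ.trans hC, hreg⟩

end chain

theorem stmt_8 (Q : Type*) [CommRing Q] [IsNoetherianRing Q] [IsLocalRing Q]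
    (h : ∃ m n : ℕ, 3 ≤ m ∧ 1 ≤ n ∧
      (∃ I : Ideal Q, IsGrade3PerfectOfFormat I m n) ∧
      2 * (m + n - 1) ≤ (m - 2) * (n + 1) ∧
      (∀ I : Ideal Q, IsGrade3PerfectOfFormat I m n → Licci I)) :
    ((∃ I : Ideal Q, IsGrade3PerfectOfFormat I 6 3) ∧
      2 * (6 + 3 - 1) ≤ (6 - 2) * (3 + 1) ∧
      (∀ I : Ideal Q, IsGrade3PerfectOfFormat I 6 3 → Licci I)) ∨
    ((∃ I : Ideal Q, IsGrade3PerfectOfFormat I 8 2) ∧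
      2 * (8 + 2 - 1) ≤ (8 - 2) * (2 + 1) ∧
      (∀ I : Ideal Q, IsGrade3PerfectOfFormat I 8 2 → Licci I)) := by

  obtain ⟨m, n, hm, hn, ⟨I0, ⟨x, y, z, -, -, -, hr⟩, -⟩, hd, hl⟩ := h
  obtain ⟨⟨A, hA⟩, ⟨B, hB⟩⟩ := exists63 hr
  rcases reach_all (Q := Q) hm hn hd with h | h
  · exact Or.inl ⟨⟨A, hA.1, by norm_num, by norm_num, hA.2⟩, by norm_num, final_step hm hn hl h⟩
  · exact Or.inr ⟨⟨B, hB.1, by norm_num, by norm_num, hB.2⟩, by norm_num, final_step hm hn hl h⟩
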